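/- arXiv:1107.2888 — 5 statements merged into one kernel-verified Lean document; each statement's English description precedes it below -/
import Mathlib

section
/- There exists N such that for every integer n ≥ N that is divisible by 4, every 2-coloring c of Z_n satisfies M_4(n,c) ≥ (2/33)·n². -/
/-- Number of monochromatic `k`-APs in `Z_n` under the 2-coloring `c`:
pairs `(a,d)` with `c a = c (a+d) = ⋯ = c (a+(k-1)d)`. -/
noncomputable def monoAPCount (n k : ℕ) (c : ZMod n → Fin 2) : ℕ :=
  Set.ncard {p : ZMod n × ZMod n | ∀ i < k, c (p.1 + i • p.2) = c p.1}

/-!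
Write the colouring as a sign function `f` on the cyclic group `G`. The 4-AP count and all its
relatives are sums over `(a, d)` of polynomials in the signs `f (a + i • d)`, `i ∈ ℤ`. Such sums do
not change when the polynomial is translated or reflected. Two kinds of inequality relate
progressions of difference `g • d` and `(k * g) • d`: as `d ↦ k • d` is at most `k`-to-one, a
nonnegative polynomial has along the latter at most `k` times its sum along the former; and by
Cauchy-Schwarz the pair correlations are nonnegative and increase along multiples of `g`. A suitable
nonnegative combination of these inequalities, subtracted from the 4-AP count minus `2 / 33`, leaves
a polynomial which, up to translations and reflections, is nonnegative at each of the `2 ^ 17` sign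
assignments to its 17 variables. The combination is a rounded numerical solution of the dual linear
program. Its nonnegativity is decided by packing the `2 ^ 17` values as digits of a single integer,
whose digits are tested together by one bitwise conjunction.
-/

lemma land_eq_of_add_mul {k a b c d : ℕ} (ha : a < 2 ^ k) (hc : c < 2 ^ k)
    (h : (a + 2 ^ k * b) &&& (c + 2 ^ k * d) = c + 2 ^ k * d) : a &&& c = c ∧ b &&& d = d := by
  constructor
  · have := congrArg (· % 2 ^ k) h
    simpa [Nat.and_mod_two_pow, Nat.add_mul_mod_self_left, Nat.mod_eq_of_lt ha,
      Nat.mod_eq_of_lt hc] using this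
  · have := congrArg (· / 2 ^ k) h
    simpa [Nat.and_div_two_pow, Nat.add_mul_div_left, Nat.div_eq_of_lt ha,
      Nat.div_eq_of_lt hc] using this

section EvenSublists

variable {ι : Type*}

lemma sum_map_prod_sublists' {R : Type*} [CommSemiring R] (f : ι → R) (l : List ι) :
    (l.sublists'.map fun m => (m.map f).prod).sum = (l.map fun i => 1 + f i).prod := by
  induction l with
  | nil => simp
  | cons i l ih =>
    simp only [List.sublists'_cons, List.map_append, List.map_map, Function.comp_def,
      List.map_cons, List.prod_cons, List.sum_append, List.sum_map_mul_left, ih]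
    ring

/-- The sublists of `vars` of even length: the monomials of the polynomials that are even, that is,
invariant under exchanging the two colours. -/
def evenSublists (vars : List ι) : List (List ι) :=
  vars.sublists'.filter fun l => Even l.length

lemma two_mul_sum_evenSublists {R : Type*} [CommRing R] (f : ι → R) (vars : List ι) :
    2 * ((evenSublists vars).map fun l => (l.map f).prod).sum =
      (vars.map fun i => 1 + f i).prod + (vars.map fun i => 1 - f i).prod := by
  have hneg := sum_map_prod_sublists' (fun i => -f i) vars
  simp only [← sub_eq_add_neg] at hneg
  rw [← sum_map_prod_sublists' f, ← hneg, ← List.sum_map_add, evenSublists]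
  induction vars.sublists' with
  | nil => simp
  | cons l L ih =>
    have hl : (l.map fun i => -f i).prod = (-1) ^ l.length * (l.map f).prod := by
      simpa [Function.comp_def] using (l.map f).prod_map_neg
    rw [List.map_cons, List.sum_cons, ← ih, hl]
    rcases Nat.even_or_odd l.length with h | h
    · simp only [List.filter_cons, h, decide_true, if_true, List.map_cons, List.sum_cons,
        Even.neg_one_pow]
      ring
    · simp [h, Nat.not_even_iff_odd.2 h]

end EvenSublists

section CyclicGroup

variable {G R : Type*} [AddCommGroup G] [Fintype G] [CommRing R]

lemma card_filter_nsmul_eq_le [IsAddCyclic G] [DecidableEq G] {k : ℕ} (hk : 0 < k) (e : G) :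
    (Finset.univ.filter fun d : G => k • d = e).card ≤ k := by
  rcases (Finset.univ.filter fun d : G => k • d = e).eq_empty_or_nonempty with h | ⟨d₀, h₀⟩
  · rw [h, Finset.card_empty]
    exact hk.le
  · rw [Finset.mem_filter] at h₀
    refine le_trans (Finset.card_le_card_of_injOn (fun d => d - d₀) (fun d hd => ?_)
      fun _ _ _ _ h => sub_left_injective h) (IsAddCyclic.card_nsmul_eq_zero_le (α := G) hk)
    rw [Finset.mem_coe, Finset.mem_filter] at hd
    simp [smul_sub, hd.2, h₀.2]

/-- Up to multiplicity, the sum of `f` over the coset of `g • G` that contains `a`. -/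
def cosetSum (f : G → R) (g : ℤ) (a : G) : R := ∑ d, f (a + g • d)

/-- The correlation of `f` with itself along the pairs of difference `g • d`. -/
def correlation (f : G → R) (g : ℤ) : R := ∑ a, ∑ d, f a * f (a + g • d)

lemma card_mul_correlation (f : G → R) (g : ℤ) :
    Fintype.card G * correlation f g = ∑ a, cosetSum f g a ^ 2 := by
  have hshift (e : G) : ∑ a, f (a + g • e) * cosetSum f g a = correlation f g := by
    refine Fintype.sum_equiv (Equiv.addRight (g • e)) _ _ fun a => ?_
    rw [cosetSum, Finset.mul_sum]
    refine Fintype.sum_equiv (Equiv.subRight e) _ _ fun d => ?_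
    simp [smul_sub]
  calc Fintype.card G * correlation f g
      = ∑ e, ∑ a, f (a + g • e) * cosetSum f g a := by
        simp only [hshift, Finset.sum_const, Finset.card_univ, nsmul_eq_mul]
    _ = ∑ a, cosetSum f g a ^ 2 := by
        rw [Finset.sum_comm]
        simp only [← Finset.sum_mul, sq, cosetSum]

lemma card_mul_cosetSum (f : G → R) (k g : ℤ) (a : G) :
    Fintype.card G * cosetSum f g a = ∑ j, cosetSum f (k * g) (a + g • j) := by
  have hshift (e : G) : ∑ j, f (a + g • j + (k * g) • e) = cosetSum f g a := by
    refine Fintype.sum_equiv (Equiv.addRight (k • e)) _ _ fun j => ?_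
    simp only [Equiv.coe_addRight, smul_add, add_assoc, mul_comm k g, mul_smul]
  calc Fintype.card G * cosetSum f g a
      = ∑ e, ∑ j, f (a + g • j + (k * g) • e) := by
        simp only [hshift, Finset.sum_const, Finset.card_univ, nsmul_eq_mul]
    _ = ∑ j, cosetSum f (k * g) (a + g • j) := Finset.sum_comm

variable [LinearOrder R] [IsStrictOrderedRing R]

lemma sum_nsmul_le [IsAddCyclic G] {k : ℕ} (hk : 0 < k) {φ : G → R} (hφ : ∀ d, 0 ≤ φ d) :
    ∑ d, φ (k • d) ≤ k * ∑ d, φ d := by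
  classical
  calc ∑ d, φ (k • d)
      = ∑ e, ∑ d with k • d = e, φ (k • d) :=
        (Finset.sum_fiberwise_of_maps_to (fun _ _ => Finset.mem_univ _) _).symm
    _ = ∑ e, (Finset.univ.filter fun d : G => k • d = e).card * φ e := by
        refine Finset.sum_congr rfl fun e _ => ?_
        rw [Finset.sum_congr rfl fun d hd => by rw [(Finset.mem_filter.1 hd).2],
          Finset.sum_const, nsmul_eq_mul]
    _ ≤ ∑ e, k * φ e := by
        gcongr with e
        · exact hφ e
        · exact card_filter_nsmul_eq_le hk e
    _ = k * ∑ d, φ d := (Finset.mul_sum _ _ _).symm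

lemma correlation_nonneg (f : G → R) (g : ℤ) : 0 ≤ correlation f g := by
  have hG : (0 : R) < Fintype.card G := by exact_mod_cast Fintype.card_pos
  refine nonneg_of_mul_nonneg_right ?_ hG
  rw [card_mul_correlation]
  positivity

-- `cosetSum f g` averages translates of `cosetSum f (k * g)`, so its mean square is smaller.
lemma correlation_le_correlation_mul (f : G → R) (k g : ℤ) :
    correlation f g ≤ correlation f (k * g) := by
  have hG : (0 : R) < Fintype.card G := by exact_mod_cast Fintype.card_pos
  have hcauchy (a : G) : Fintype.card G * cosetSum f g a ^ 2 ≤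
      ∑ j, cosetSum f (k * g) (a + g • j) ^ 2 := by
    refine le_of_mul_le_mul_left ?_ hG
    calc Fintype.card G * (Fintype.card G * cosetSum f g a ^ 2)
        = (∑ j, cosetSum f (k * g) (a + g • j)) ^ 2 := by rw [← card_mul_cosetSum]; ring
      _ ≤ Fintype.card G * ∑ j, cosetSum f (k * g) (a + g • j) ^ 2 := sq_sum_le_card_mul_sum_sq
  have hshift (j : G) : ∑ a, cosetSum f (k * g) (a + g • j) ^ 2 =
      ∑ a, cosetSum f (k * g) a ^ 2 :=
    Fintype.sum_equiv (Equiv.addRight (g • j)) _ _ fun _ => rfl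
  refine le_of_mul_le_mul_left ?_ hG
  rw [card_mul_correlation, card_mul_correlation]
  refine le_of_mul_le_mul_left ?_ hG
  calc Fintype.card G * ∑ a, cosetSum f g a ^ 2
      ≤ ∑ a, ∑ j, cosetSum f (k * g) (a + g • j) ^ 2 := by
        rw [Finset.mul_sum]; exact Finset.sum_le_sum fun a _ => hcauchy a
    _ = Fintype.card G * ∑ a, cosetSum f (k * g) a ^ 2 := by
        rw [Finset.sum_comm]
        simp only [hshift, Finset.sum_const, Finset.card_univ, nsmul_eq_mul]

end CyclicGroup

/-- Integer polynomials in `±1`-valued variables indexed by `ι`, as lists of pairs of a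
coefficient and a monomial, which is the list of its variables. -/
abbrev SignPoly (ι : Type*) := List (ℤ × List ι)

namespace SignPoly

section Basic

variable {ι κ : Type*}

/-- The value of a polynomial at a sign assignment. -/
def eval (x : ι → ℤˣ) (P : SignPoly ι) : ℤ :=
  (P.map fun t => (t.1 * ((t.2.map x).prod : ℤˣ) : ℤ)).sum

/-- Multiplication by a constant; addition of polynomials is `++`. -/
def scale (k : ℤ) (P : SignPoly ι) : SignPoly ι := P.map fun t => (k * t.1, t.2)

/-- Change of variables. -/
def rename (e : ι → κ) (P : SignPoly ι) : SignPoly κ := P.map fun t => (t.1, t.2.map e)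

lemma eval_append (x : ι → ℤˣ) (P Q : SignPoly ι) : eval x (P ++ Q) = eval x P + eval x Q := by
  rw [eval, List.map_append, List.sum_append, eval, eval]

lemma eval_scale (x : ι → ℤˣ) (k : ℤ) (P : SignPoly ι) : eval x (P.scale k) = k * eval x P := by
  simp only [eval, scale, List.map_map, Function.comp_def, mul_assoc, List.sum_map_mul_left]

lemma eval_rename (x : κ → ℤˣ) (e : ι → κ) (P : SignPoly ι) :
    eval x (P.rename e) = eval (x ∘ e) P := by
  simp only [eval, rename, List.map_map, Function.comp_def]

end Basic

section NonnegativityTest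

variable {ι : Type*}

/-- The sum of the absolute values of the coefficients, which bounds all values. -/
def weight (P : SignPoly ι) : ℕ := (P.map fun t => t.1.natAbs).sum

/-- The number with `2 ^ m` digits, all equal to `1`, in base `2 ^ s`. -/
def ones (s : ℕ) : ℕ → ℕ
  | 0 => 1
  | m + 1 => (1 + 2 ^ (s * 2 ^ m)) * ones s m

lemma ones_mul_lt (s m a : ℕ) (ha : a < 2 ^ s) : a * ones s m < 2 ^ (s * 2 ^ m) := by
  induction m with
  | zero => simpa [ones] using ha
  | succ m ih =>
    calc a * ones s (m + 1) = a * ones s m * 2 ^ (s * 2 ^ m) + a * ones s m := by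
          rw [ones]; ring
      _ < (a * ones s m + 1) * 2 ^ (s * 2 ^ m) := by rw [add_mul, one_mul]; gcongr
      _ ≤ 2 ^ (s * 2 ^ m) * 2 ^ (s * 2 ^ m) := by gcongr; omega
      _ = 2 ^ (s * 2 ^ (m + 1)) := by rw [← pow_add]; congr 1; ring

variable [DecidableEq ι]

/-- Substitution of the sign `e` for one occurrence of the variable `i` in each monomial. -/
def specialize (i : ι) (e : ℤˣ) (P : SignPoly ι) : SignPoly ι :=
  P.map fun t => if i ∈ t.2 then (e * t.1, t.2.erase i) else t

lemma eval_specialize (x : ι → ℤˣ) (i : ι) (P : SignPoly ι) :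
    eval x (P.specialize i (x i)) = eval x P := by
  rw [eval, specialize, List.map_map, eval]
  congr 1
  refine List.map_congr_left fun t _ => ?_
  simp only [Function.comp_apply]
  split_ifs with hi
  · rw [← List.prod_map_erase x hi, Units.val_mul]
    ring
  · rfl

lemma weight_specialize (i : ι) (e : ℤˣ) (P : SignPoly ι) :
    weight (P.specialize i e) = weight P := by
  rw [weight, specialize, List.map_map, weight]
  congr 1
  refine List.map_congr_left fun t _ => ?_
  simp only [Function.comp_apply]
  split_ifs
  · rw [Int.natAbs_mul, Int.units_natAbs, one_mul]
  · rfl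

lemma subperm_of_mem_specialize {i : ι} {e : ℤˣ} {vars : List ι} {P : SignPoly ι}
    (hP : ∀ t ∈ P, t.2.Subperm (i :: vars)) : ∀ t ∈ P.specialize i e, t.2.Subperm vars := by
  intro t ht
  obtain ⟨u, hu, rfl⟩ := List.mem_map.1 ht
  have h := (hP u hu).erase i
  rw [List.erase_cons_head] at h
  split_ifs with hi
  · exact h
  · rwa [List.erase_of_not_mem hi] at h

/-- The part of `P` that does not involve the variable `i`. -/
def without (i : ι) (P : SignPoly ι) : SignPoly ι := P.filter fun t => i ∉ t.2

/-- The factor `Q` in the decomposition `P = P.without i + i * Q`. -/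
def tails (i : ι) (P : SignPoly ι) : SignPoly ι :=
  (P.filter fun t => i ∈ t.2).map fun t => (t.1, t.2.erase i)

/-- The number whose (signed) digits in base `2 ^ s` are the values of `P` at the `2 ^ vars.length`
sign assignments to `vars`. The emptiness test prunes the recursion, and the powers are cast from
`ℕ` so that the kernel computes them with its built-in arithmetic. -/
def pack (s : ℕ) : List ι → SignPoly ι → ℤ
  | [], P => (P.map Prod.fst).sum
  | i :: vars, P => bif P.isEmpty then 0 else
      (1 + (2 ^ (s * 2 ^ vars.length) : ℕ)) * pack s vars (P.without i) +
        (1 - (2 ^ (s * 2 ^ vars.length) : ℕ)) * pack s vars (P.tails i)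

/-- The factor by which a monomial multiplies its coefficient in `pack s vars`. -/
def packMonomial (s : ℕ) : List ι → List ι → ℤ
  | [], _ => 1
  | i :: vars, l =>
      if i ∈ l then (1 - (2 ^ (s * 2 ^ vars.length) : ℕ)) * packMonomial s vars (l.erase i)
      else (1 + (2 ^ (s * 2 ^ vars.length) : ℕ)) * packMonomial s vars l

lemma pack_nil (s : ℕ) (vars : List ι) : pack s vars [] = 0 := by
  cases vars <;> rfl

lemma pack_eq_sum (s : ℕ) (vars : List ι) (P : SignPoly ι) :
    pack s vars P = (P.map fun t => t.1 * packMonomial s vars t.2).sum := by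
  induction vars generalizing P with
  | nil => simp only [pack, packMonomial, mul_one]
  | cons i vars ih =>
    have hpack (P : SignPoly ι) : pack s (i :: vars) P =
        (1 + (2 ^ (s * 2 ^ vars.length) : ℕ)) * pack s vars (without i P) +
          (1 - (2 ^ (s * 2 ^ vars.length) : ℕ)) * pack s vars (tails i P) := by
      cases P with
      | nil => simp [pack, without, tails, pack_nil]
      | cons => rfl
    induction P with
    | nil => rfl
    | cons t P ihP =>
      rw [List.map_cons, List.sum_cons, ← ihP, hpack, hpack, ih, ih, ih, ih, packMonomial]
      by_cases hi : i ∈ t.2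
      · simp only [without, tails, List.filter_cons, hi, not_true, decide_true,
          decide_false, if_true, Bool.false_eq_true, if_false, List.map_cons, List.sum_cons]
        ring
      · simp only [without, tails, List.filter_cons, hi, not_false_eq_true, decide_true,
          decide_false, if_true, Bool.false_eq_true, if_false, List.map_cons, List.sum_cons]
        ring

lemma pack_cons (s : ℕ) (i : ι) (vars : List ι) (P : SignPoly ι) :
    pack s (i :: vars) P = pack s vars (P.specialize i 1) +
      (2 ^ (s * 2 ^ vars.length) : ℕ) * pack s vars (P.specialize i (-1)) := by
  simp only [pack_eq_sum, specialize, List.map_map]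
  rw [← List.sum_map_mul_left, ← List.sum_map_add]
  congr 1
  refine List.map_congr_left fun t _ => ?_
  simp only [Function.comp_apply, packMonomial]
  split_ifs <;> push_cast <;> ring

lemma abs_pack_le (s : ℕ) (vars : List ι) (P : SignPoly ι) :
    |pack s vars P| ≤ weight P * ones s vars.length := by
  induction vars generalizing P with
  | nil =>
    induction P with
    | nil => simp [pack, weight]
    | cons t P ih =>
      simp only [pack, weight, ones, List.map_cons, List.sum_cons, List.length_nil] at ih ⊢
      push_cast at ih ⊢
      linarith [abs_add_le t.1 (P.map Prod.fst).sum]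
  | cons i vars ih =>
    have h₁ := ih (P.specialize i 1)
    have h₂ := ih (P.specialize i (-1))
    rw [weight_specialize] at h₁ h₂
    calc |pack s (i :: vars) P|
        ≤ |pack s vars (P.specialize i 1)| +
            (2 ^ (s * 2 ^ vars.length) : ℕ) * |pack s vars (P.specialize i (-1))| := by
          rw [pack_cons]
          refine (abs_add_le _ _).trans_eq ?_
          rw [abs_mul, Nat.abs_cast]
      _ ≤ weight P * ones s vars.length +
            (2 ^ (s * 2 ^ vars.length) : ℕ) * (weight P * ones s vars.length) := by gcongr
      _ = weight P * ones s (i :: vars).length := by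
          rw [List.length_cons, ones]; push_cast; ring

lemma exists_pack_add_eq (s : ℕ) (vars : List ι) {P : SignPoly ι} (hw : weight P < 2 ^ s) :
    ∃ A : ℕ, A < 2 ^ ((s + 1) * 2 ^ vars.length) ∧
      pack (s + 1) vars P + (2 ^ s * ones (s + 1) vars.length : ℕ) = A := by
  have habs := abs_le.1 (abs_pack_le (s + 1) vars P)
  have hle : (weight P : ℤ) * ones (s + 1) vars.length ≤
      (2 ^ s * ones (s + 1) vars.length : ℕ) := by
    exact_mod_cast Nat.mul_le_mul_right _ hw.le
  obtain ⟨A, hA⟩ := Int.eq_ofNat_of_zero_le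
    (a := pack (s + 1) vars P + (2 ^ s * ones (s + 1) vars.length : ℕ)) (by linarith)
  refine ⟨A, ?_, hA⟩
  have hA' : (A : ℤ) ≤ ((weight P + 2 ^ s) * ones (s + 1) vars.length : ℕ) := by
    rw [← hA, add_mul]; push_cast; linarith
  exact (Int.ofNat_le.1 hA').trans_lt (ones_mul_lt _ _ _ (by rw [pow_succ]; omega))

lemma eval_nonneg_of_land_eq {s : ℕ} (x : ι → ℤˣ) {vars : List ι} {P : SignPoly ι}
    (hP : ∀ t ∈ P, t.2.Subperm vars) (hw : weight P < 2 ^ s) {A : ℕ}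
    (hA : pack (s + 1) vars P + (2 ^ s * ones (s + 1) vars.length : ℕ) = A)
    (h : A &&& (2 ^ s * ones (s + 1) vars.length) = 2 ^ s * ones (s + 1) vars.length) :
    0 ≤ eval x P := by
  induction vars generalizing P A with
  | nil =>
    have heval : eval x P = pack (s + 1) [] P := by
      rw [eval, pack]
      congr 1
      refine List.map_congr_left fun t ht => ?_
      rw [List.subperm_nil.1 (hP t ht), List.map_nil, List.prod_nil, Units.val_one, mul_one]
    have := h ▸ Nat.and_le_left
    omega
  | cons i vars ih =>
    have hsub (e : ℤˣ) := exists_pack_add_eq s vars (P := P.specialize i e)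
      (by rwa [weight_specialize])
    obtain ⟨A₁, hlt, hA₁⟩ := hsub 1
    obtain ⟨A₂, -, hA₂⟩ := hsub (-1)
    have hsplit : A = A₁ + 2 ^ ((s + 1) * 2 ^ vars.length) * A₂ := by
      zify
      rw [← hA, ← hA₁, ← hA₂, pack_cons, List.length_cons, ones]
      push_cast
      ring
    have hones : 2 ^ s * ones (s + 1) (i :: vars).length = 2 ^ s * ones (s + 1) vars.length +
        2 ^ ((s + 1) * 2 ^ vars.length) * (2 ^ s * ones (s + 1) vars.length) := by
      rw [List.length_cons, ones]; ring
    rw [hsplit, hones] at h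
    obtain ⟨h₁, h₂⟩ := land_eq_of_add_mul hlt (ones_mul_lt _ _ _ (by gcongr <;> omega)) h
    rw [← eval_specialize x i]
    refine (Int.units_eq_one_or (x i)).elim (fun hx => ?_) fun hx => ?_ <;> rw [hx]
    · exact ih (subperm_of_mem_specialize hP) (by rwa [weight_specialize]) hA₁ h₁
    · exact ih (subperm_of_mem_specialize hP) (by rwa [weight_specialize]) hA₂ h₂

/-- A test for nonnegativity at all sign assignments to `vars`. The values have absolute value less
than `2 ^ s`, so after adding `2 ^ s` each becomes a digit of `s + 1` bits, whose top bit is set if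
and only if the value is nonnegative. -/
def isNonneg (s : ℕ) (vars : List ι) (P : SignPoly ι) : Bool :=
  P.all (fun t => decide (t.2.Subperm vars)) && decide (weight P < 2 ^ s) &&
    (((pack (s + 1) vars P + (2 ^ s * ones (s + 1) vars.length : ℕ)).toNat &&&
      2 ^ s * ones (s + 1) vars.length) == 2 ^ s * ones (s + 1) vars.length)

theorem eval_nonneg_of_isNonneg {s : ℕ} {vars : List ι} {P : SignPoly ι}
    (h : P.isNonneg s vars = true) (x : ι → ℤˣ) : 0 ≤ eval x P := by
  simp only [isNonneg, Bool.and_eq_true, List.all_eq_true, decide_eq_true_eq, beq_iff_eq] at h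
  obtain ⟨⟨hP, hw⟩, hland⟩ := h
  obtain ⟨A, -, hA⟩ := exists_pack_add_eq s vars hw
  refine eval_nonneg_of_land_eq x hP hw hA ?_
  rwa [hA, Int.toNat_natCast] at hland

end NonnegativityTest

section Patterns

variable {ι : Type*}

lemma prod_one_add_unit_mul (x : ι → ℤˣ) (e : ℤˣ) (vars : List ι) :
    (vars.map fun j => 1 + (e : ℤ) * x j).prod =
      if ∀ j ∈ vars, x j = e then 2 ^ vars.length else 0 := by
  induction vars with
  | nil => simp
  | cons i vars ih =>
    rw [List.map_cons, List.prod_cons, ih]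
    rcases eq_or_ne (x i) e with rfl | h
    · simp [pow_succ']
    · simp [Int.units_ne_iff_eq_neg.1 h]

variable [DecidableEq ι]

/-- The sign at `i` of a pattern, which is encoded by the list of the positions of its minus
signs. -/
def signAt (m : List ι) (i : ι) : ℤ := if i ∈ m then -1 else 1

/-- The nonnegative even polynomial with prescribed values: for each `(w, m)` in `L` it takes the
value `2 ^ (vars.length - 1) * w` at the pattern `m` on `vars` and at its negative (these
contributions being added up), and it vanishes at all other sign assignments. -/
def patternForm (vars : List ι) (L : List (ℕ × List ι)) : SignPoly ι :=
  (evenSublists vars).map fun l => ((L.map fun p => (p.1 : ℤ) * (l.map (signAt p.2)).prod).sum, l)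

lemma two_mul_eval_patternForm (x : ι → ℤˣ) (vars : List ι) (L : List (ℕ × List ι)) :
    2 * eval x (patternForm vars L) = (L.map fun p => (p.1 : ℤ) *
      ((vars.map fun i => 1 + signAt p.2 i * x i).prod +
        (vars.map fun i => 1 - signAt p.2 i * x i).prod)).sum := by
  have hprod (l : List ι) : (((l.map x).prod : ℤˣ) : ℤ) = (l.map fun i => (x i : ℤ)).prod := by
    rw [← Units.coeHom_apply, map_list_prod, List.map_map]; rfl
  simp only [← two_mul_sum_evenSublists, List.prod_map_mul]
  induction L with
  | nil => simp [eval, patternForm, Function.comp_def]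
  | cons p L ih =>
    rw [List.map_cons, List.sum_cons, ← ih]
    simp only [eval, patternForm, List.map_map, Function.comp_def, List.map_cons, List.sum_cons,
      add_mul, List.sum_map_add, mul_assoc, List.sum_map_mul_left, hprod]
    ring

lemma eval_patternForm_nonneg (x : ι → ℤˣ) (vars : List ι) (L : List (ℕ × List ι)) :
    0 ≤ eval x (patternForm vars L) := by
  have habs (m : List ι) (i : ι) : |signAt m i * x i| ≤ 1 := by
    rcases Int.units_eq_one_or (x i) with h | h <;> rw [signAt, h] <;> split_ifs <;> simp
  suffices h : 0 ≤ 2 * eval x (patternForm vars L) by linarith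
  rw [two_mul_eval_patternForm]
  refine List.sum_nonneg (List.forall_mem_map.2 fun p _ => ?_)
  refine mul_nonneg p.1.cast_nonneg (add_nonneg ?_ ?_) <;>
    refine List.prod_nonneg (List.forall_mem_map.2 fun i _ => ?_) <;>
    linarith [abs_le.1 (habs p.2 i)]

end Patterns

/-- The indicator, multiplied by `2 ^ (k - 1)`, that the signs at `0, …, k - 1` agree. -/
def monoForm (k : ℕ) : SignPoly ℤ := patternForm ((List.range k).map (↑)) [(1, [])]

lemma eval_monoForm_succ (x : ℤ → ℤˣ) (k : ℕ) :
    eval x (monoForm (k + 1)) = if ∀ i < k + 1, x (i : ℕ) = x 0 then 2 ^ k else 0 := by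
  have hprod (e : ℤˣ) := prod_one_add_unit_mul x e ((List.range (k + 1)).map (↑))
  simp only [List.forall_mem_map, List.mem_range, List.length_map, List.length_range] at hprod
  have htwo : 2 * eval x (monoForm (k + 1)) =
      (if ∀ i < k + 1, x (i : ℕ) = 1 then 2 ^ (k + 1) else 0) +
        if ∀ i < k + 1, x (i : ℕ) = -1 then 2 ^ (k + 1) else 0 := by
    rw [← hprod, ← hprod, monoForm, two_mul_eval_patternForm]
    simp [signAt, ← sub_eq_add_neg]
  have hzero {e : ℤˣ} (he : x 0 ≠ e) : ¬ ∀ i < k + 1, x (i : ℕ) = e := fun h =>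
    he (by exact_mod_cast h 0 k.succ_pos)
  refine mul_left_cancel₀ (two_ne_zero (α := ℤ)) (htwo.trans ?_)
  rcases Int.units_eq_one_or (x 0) with h | h
  · rw [if_neg (hzero (e := -1) (by simp [h])), h, add_zero]
    split_ifs <;> ring
  · rw [if_neg (hzero (e := 1) (by simp [h])), h, zero_add]
    split_ifs <;> ring

section Progressions

/-- The polynomial `P` along the progression `s, s + g, s + 2 * g, …` of variables. -/
def window (s g : ℤ) (P : SignPoly ℤ) : SignPoly ℤ := P.rename fun i => s + g * i

/-- The polynomial `P` read backwards. -/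
def reflect (P : SignPoly ℤ) : SignPoly ℤ := P.rename Neg.neg

variable {G : Type*} [AddCommGroup G] [Fintype G] (f : G → ℤˣ)

/-- The sum over all `(a, d)` of the polynomial `P` in the signs of `f` along `a + ℤ • d`. -/
def progressionSum (P : SignPoly ℤ) : ℤ := ∑ a : G, ∑ d : G, P.eval fun i => f (a + i • d)

lemma progressionSum_append (P Q : SignPoly ℤ) :
    progressionSum f (P ++ Q) = progressionSum f P + progressionSum f Q := by
  simp only [progressionSum, eval_append, Finset.sum_add_distrib]

lemma progressionSum_scale (k : ℤ) (P : SignPoly ℤ) :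
    progressionSum f (P.scale k) = k * progressionSum f P := by
  simp only [progressionSum, eval_scale, Finset.mul_sum]

lemma progressionSum_nonneg {P : SignPoly ℤ} (hP : ∀ x, 0 ≤ P.eval x) : 0 ≤ progressionSum f P :=
  Finset.sum_nonneg fun _ _ => Finset.sum_nonneg fun _ _ => hP _

lemma progressionSum_const (c : ℤ) :
    progressionSum f [(c, [])] = c * (Fintype.card G : ℤ) ^ 2 := by
  simp only [progressionSum, eval, List.map_cons, List.map_nil, List.prod_nil, Units.val_one,
    mul_one, List.sum_cons, List.sum_nil, add_zero, Finset.sum_const, Finset.card_univ,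
    nsmul_eq_mul]
  ring

lemma progressionSum_window (s g : ℤ) (P : SignPoly ℤ) :
    progressionSum f (P.window s g) = ∑ d : G, ∑ a : G, P.eval fun i => f (a + i • g • d) := by
  simp only [progressionSum, window, eval_rename, Function.comp_def]
  rw [Finset.sum_comm]
  refine Finset.sum_congr rfl fun d _ => ?_
  refine Fintype.sum_equiv (Equiv.addRight (s • d)) _ _ fun a => ?_
  simp only [Equiv.coe_addRight, add_smul, mul_comm g, mul_smul, add_assoc]

lemma progressionSum_window_one (s : ℤ) (P : SignPoly ℤ) :
    progressionSum f (P.window s 1) = progressionSum f P := by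
  rw [progressionSum_window, progressionSum, Finset.sum_comm]
  simp only [one_smul]

lemma progressionSum_reflect (P : SignPoly ℤ) :
    progressionSum f P.reflect = progressionSum f P := by
  simp only [progressionSum, reflect, eval_rename, Function.comp_def]
  refine Finset.sum_congr rfl fun a _ => Fintype.sum_equiv (Equiv.neg G) _ _ fun d => ?_
  simp only [Equiv.neg_apply, smul_neg, neg_smul]

/-- The combination of translates of the monomial `l` with the coefficients and shifts listed as
pairs in `ws`. -/
def translationForm (l : List ℤ) (ws : List (ℤ × ℤ)) : SignPoly ℤ :=
  ws.map fun w => (w.1, l.map (w.2 + ·))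

lemma progressionSum_translationForm (l : List ℤ) (ws : List (ℤ × ℤ)) :
    progressionSum f (translationForm l ws) =
      (ws.map Prod.fst).sum * progressionSum f [(1, l)] := by
  induction ws with
  | nil => simp [translationForm, progressionSum, eval]
  | cons w ws ih =>
    have hw : translationForm l (w :: ws) =
        (window w.2 1 [(1, l)]).scale w.1 ++ translationForm l ws := by
      simp [translationForm, window, rename, scale]
    rw [hw, progressionSum_append, progressionSum_scale, progressionSum_window_one, ih,
      List.map_cons, List.sum_cons, add_mul]

lemma progressionSum_flatMap_translationForm {T : List (List ℤ × List (ℤ × ℤ))}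
    (hT : ∀ t ∈ T, (t.2.map Prod.fst).sum = 0) :
    progressionSum f (T.flatMap fun t => translationForm t.1 t.2) = 0 := by
  induction T with
  | nil => simp [progressionSum, eval]
  | cons t T ih =>
    rw [List.forall_mem_cons] at hT
    rw [List.flatMap_cons, progressionSum_append, progressionSum_translationForm, hT.1, zero_mul,
      ih hT.2, add_zero]

/-- `k` times `P` along progressions of difference `g`, minus `P` along those of difference `k * g`.
The starting points `s` and `t` do not affect sums over progressions; they only choose which
variables occur. -/
def dilationForm (P : SignPoly ℤ) (k : ℕ) (g s t : ℤ) : SignPoly ℤ :=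
  (P.window s g).scale k ++ (P.window t (k * g)).scale (-1)

lemma progressionSum_dilationForm_nonneg [IsAddCyclic G] {P : SignPoly ℤ}
    (hP : ∀ x, 0 ≤ P.eval x) {k : ℕ} (hk : 0 < k) (g s t : ℤ) :
    0 ≤ progressionSum f (dilationForm P k g s t) := by
  have h := sum_nsmul_le hk (φ := fun d : G => ∑ a, P.eval fun i => f (a + i • g • d))
    fun d => Finset.sum_nonneg fun a _ => hP _
  rw [dilationForm, progressionSum_append, progressionSum_scale, progressionSum_scale,
    progressionSum_window, progressionSum_window, neg_one_mul, ← sub_eq_add_neg, sub_nonneg]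
  refine le_trans (le_of_eq ?_) h
  simp only [mul_comm _ g, mul_smul, natCast_zsmul]

/-- The product of two consecutive signs, whose sums over progressions are correlations. -/
def pairForm : SignPoly ℤ := [(1, [0, 1])]

lemma progressionSum_window_pairForm (s g : ℤ) :
    progressionSum f (pairForm.window s g) = correlation (fun a => (f a : ℤ)) g := by
  rw [progressionSum_window, Finset.sum_comm]
  simp [pairForm, eval, correlation]

/-- The increment of the correlation from difference `g` to difference `k * g`; `s` only chooses
which variables occur. -/
def correlationForm (k g s : ℤ) : SignPoly ℤ :=
  pairForm.window s (k * g) ++ (pairForm.window s g).scale (-1)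

lemma progressionSum_correlationForm_nonneg (k g s : ℤ) :
    0 ≤ progressionSum f (correlationForm k g s) := by
  rw [correlationForm, progressionSum_append, progressionSum_scale, neg_one_mul,
    ← sub_eq_add_neg, sub_nonneg, progressionSum_window_pairForm, progressionSum_window_pairForm]
  exact correlation_le_correlation_mul _ k g

end Progressions

section Certificate

/-- The pattern weights for passing from difference `1` to `2`. -/
def doublingForm : SignPoly ℤ :=
  patternForm [0, 1, 2, 3, 4, 5, 6] [
    (98, []), (16, [2, 3]), (43, [1, 3]), (63, [1, 3, 5]), (60, [1, 3, 5, 6]), (19, [1, 3, 4]),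
    (7, [1, 3, 4, 5, 6]), (21, [1, 2]), (30, [1, 2, 5]), (17, [1, 2, 5, 6]), (43, [1, 2, 4, 6]),
    (83, [1, 2, 3, 4, 5]), (170, [1, 2, 3, 4, 5, 6])]

/-- The pattern weights for passing from difference `1` to `3`. -/
def triplingForm : SignPoly ℤ :=
  patternForm [0, 1, 2, 3, 4, 5] [
    (31, []), (130, [2, 3]), (34, [2, 3, 4, 5]), (160, [1, 4, 5]), (73, [1, 3]), (42, [1, 3, 5]),
    (42, [1, 2]), (31, [1, 2, 4]), (55, [1, 2, 3, 4, 5])]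

/-- The pattern weights for passing from difference `2` to `4`. -/
def redoublingForm : SignPoly ℤ :=
  patternForm [0, 1, 2, 3, 4, 5] [
    (70, []), (53, [2, 3, 4, 5]), (14, [1, 4, 5]), (7, [1, 2]), (8, [1, 2, 5]),
    (95, [1, 2, 3, 4, 5])]

/-- The pattern weights for passing from difference `1` to `5`. -/
def quintuplingForm : SignPoly ℤ :=
  patternForm [0, 1, 2, 3, 4] [
    (32, []), (51, [1, 3]), (134, [1, 2])]

/-- The translations in the certificate: monomials, with coefficients and shifts for
`translationForm`. The coefficients of each monomial add up to `0`. -/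
def translationTable : List (List ℤ × List (ℤ × ℤ)) := [
  ([0, 1], [(9720, 0), (-8676, 1), (-1044, 2)]),
  ([0, 2], [(-9070, -1), (8532, 0), (1088, 1), (-679, 2), (294, 3), (-165, 5)]),
  ([0, 3], [(-8955, -1), (9073, 0), (-192, 1), (-431, 2), (282, 4), (223, 7)]),
  ([0, 4], [(1992, -2), (-75, -1), (-707, 0), (-387, 1), (-471, 2), (94, 3), (-446, 6)]),
  ([0, 5], [(-73, -2), (43, 0), (30, 5)]),
  ([0, 6], [(246, -3), (-495, -2), (320, -1), (-71, 0)]),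
  ([0, 8], [(-463, -4), (-464, -2), (1404, -1), (-477, 2)]),
  ([0, 9], [(188, -4), (-235, -2), (47, 1)]),
  ([0, 10], [(-142, -5), (142, 0)]),
  ([0, 12], [(-96, -6), (344, -5), (-248, -2)]),
  ([0, 1, 2, 3], [(-2737, -1), (1580, 0), (193, 1), (384, 2), (279, 3), (301, 4)]),
  ([0, 1, 2, 4], [(-543, -3), (1718, -2), (-1127, -1), (-19, 0), (-29, 2)]),
  ([0, 1, 2, 5], [(-49, -7), (326, -3), (-123, 1), (-154, 2)]),
  ([0, 1, 3, 4], [(-351, -2), (630, -1), (-60, 1), (-148, 2), (-71, 3)]),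
  ([0, 1, 3, 6], [(121, -7), (-28, -6), (-27, -5), (-67, -2), (-79, 0), (80, 1)]),
  ([0, 1, 4, 5], [(-103, 0), (103, 2)]),
  ([0, 1, 5, 6], [(110, 0), (-110, 1)]),
  ([0, 2, 3, 5], [(-332, -2), (138, -1), (194, 1)]),
  ([0, 2, 4, 6], [(312, -3), (-962, -2), (575, -1), (-206, 0), (281, 1)]),
  ([0, 2, 4, 8], [(110, -6), (319, -5), (-649, -4), (-69, -3), (289, -2)]),
  ([0, 2, 4, 10], [(55, -7), (-96, -4), (41, -3)]),
  ([0, 2, 6, 8], [(-357, -4), (314, -3), (43, -1)]),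
  ([0, 2, 6, 10], [(39, -6), (-39, -5)]),
  ([0, 2, 8, 10], [(95, -5), (-95, -4)]),
  ([0, 3, 6, 9], [(-97, -4), (297, -3), (-289, -2), (89, 1)]),
  ([0, 3, 6, 12], [(64, -10), (-474, -7), (216, -5), (194, -2)]),
  ([0, 3, 6, 15], [(-70, -10), (70, -5)]),
  ([0, 3, 9, 12], [(-66, -6), (221, -5), (-155, -2)]),
  ([0, 4, 6, 10], [(-21, -5), (21, -3)]),
  ([0, 4, 8, 12], [(-167, -6), (167, -5)]),
  ([0, 4, 8, 16], [(-157, -10), (157, -6)]),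
  ([0, 1, 2, 3, 4, 6], [(-90, -7), (225, -3), (24, -1), (-159, 1)]),
  ([0, 1, 2, 4, 5, 6], [(100, -3), (-23, -2), (-90, -1), (-130, 0), (143, 1)]),
  ([0, 2, 4, 6, 8, 12], [(-58, -6), (58, -5)])]

/-- The combination of the dilation and correlation inequalities in the certificate. -/
def slackForm : SignPoly ℤ :=
  dilationForm doublingForm 2 1 (-3) (-6) ++ dilationForm triplingForm 3 1 (-3) (-10) ++
    dilationForm redoublingForm 2 2 (-5) (-10) ++ dilationForm quintuplingForm 5 1 (-2) (-10) ++
    scale 18721 (correlationForm 2 1 0) ++ scale 9625 (correlationForm 3 1 0) ++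
    scale 1404 (correlationForm 2 4 (-1)) ++ scale 615 (correlationForm 3 4 (-5)) ++
    scale 166 (correlationForm 2 8 (-10)) ++ scale 57672 (pairForm.window 0 1)

/-- The gap in the 4-AP bound minus the slack, rearranged by translations. As the value of
`monoForm 4` at a monochromatic progression is `8`, the constant is `4800 = 9900 * 8 * (2 / 33)`. -/
def certificate : SignPoly ℤ :=
  scale 9900 ((monoForm 4).window (-2) 1) ++ [(-4800, [])] ++ scale (-1) slackForm ++
    translationTable.flatMap fun t => translationForm t.1 t.2

-- The values are nonnegative only after symmetrization under reflection.
lemma isNonneg_certificate : (certificate ++ certificate.reflect).isNonneg 20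
    [-10, -7, -6, -5, -4, -3, -2, -1, 0, 1, 2, 3, 4, 5, 6, 7, 10] = true := by
  decide +kernel

variable {G : Type*} [AddCommGroup G] [Fintype G] [IsAddCyclic G] (f : G → ℤˣ)

lemma progressionSum_slackForm_nonneg : 0 ≤ progressionSum f slackForm := by
  have hdil {k : ℕ} (hk : 0 < k) (vars : List ℤ) (L : List (ℕ × List ℤ)) :=
    progressionSum_dilationForm_nonneg f (fun x => eval_patternForm_nonneg x vars L) hk
  have hcor := progressionSum_correlationForm_nonneg f
  have hpair : 0 ≤ progressionSum f (pairForm.window 0 1) :=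
    progressionSum_window_pairForm f 0 1 ▸ correlation_nonneg _ 1
  have hdouble : 0 ≤ progressionSum f (dilationForm doublingForm 2 1 (-3) (-6)) :=
    hdil two_pos _ _ 1 (-3) (-6)
  have htriple : 0 ≤ progressionSum f (dilationForm triplingForm 3 1 (-3) (-10)) :=
    hdil three_pos _ _ 1 (-3) (-10)
  have hredouble : 0 ≤ progressionSum f (dilationForm redoublingForm 2 2 (-5) (-10)) :=
    hdil two_pos _ _ 2 (-5) (-10)
  have hquintuple : 0 ≤ progressionSum f (dilationForm quintuplingForm 5 1 (-2) (-10)) :=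
    hdil (by norm_num) _ _ 1 (-2) (-10)
  simp only [slackForm, progressionSum_append, progressionSum_scale]
  linarith [hcor 2 1 0, hcor 3 1 0, hcor 2 4 (-1), hcor 3 4 (-5), hcor 2 8 (-10)]

theorem card_sq_le_progressionSum_monoForm :
    16 * (Fintype.card G : ℤ) ^ 2 ≤ 33 * progressionSum f (monoForm 4) := by
  have hcert := progressionSum_nonneg f (eval_nonneg_of_isNonneg isNonneg_certificate)
  rw [progressionSum_append, progressionSum_reflect] at hcert
  have htrans := progressionSum_flatMap_translationForm f (T := translationTable) (by decide)
  simp only [certificate, progressionSum_append, progressionSum_scale, progressionSum_window_one,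
    progressionSum_const, htrans] at hcert
  linarith [progressionSum_slackForm_nonneg f]

end Certificate

end SignPoly

open SignPoly

/-- The colours `0` and `1` as the signs `1` and `-1`. -/
def colorSign (b : Fin 2) : ℤˣ := if b = 0 then 1 else -1

lemma colorSign_injective : Function.Injective colorSign := by decide

lemma progressionSum_monoForm_succ {n : ℕ} [NeZero n] (k : ℕ) (c : ZMod n → Fin 2) :
    progressionSum (colorSign ∘ c) (monoForm (k + 1)) = 2 ^ k * monoAPCount n (k + 1) c := by
  have h : {p : ZMod n × ZMod n | ∀ i < k + 1, c (p.1 + i • p.2) = c p.1} =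
      ↑(Finset.univ.filter fun p : ZMod n × ZMod n =>
        ∀ i < k + 1, c (p.1 + i • p.2) = c p.1) := by
    simp
  rw [monoAPCount, h, Set.ncard_coe_finset, progressionSum, ← Fintype.sum_prod_type']
  simp only [eval_monoForm_succ, Function.comp_apply, natCast_zsmul, zero_smul, add_zero,
    colorSign_injective.eq_iff]
  rw [← Finset.sum_filter, Finset.sum_const, nsmul_eq_mul, mul_comm]

theorem m4_lower_bound_div_four_general {n : ℕ} [NeZero n] (c : ZMod n → Fin 2) :
    (2 / 33 : ℝ) * (n : ℝ) ^ 2 ≤ (monoAPCount n 4 c : ℝ) := by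
  have h := card_sq_le_progressionSum_monoForm (colorSign ∘ c)
  rw [progressionSum_monoForm_succ 3 c, ZMod.card] at h
  have h' : 16 * (n : ℝ) ^ 2 ≤ 33 * (2 ^ 3 * monoAPCount n 4 c) := by exact_mod_cast h
  linarith

theorem m4_lower_bound_div_four :
    ∃ N : ℕ, ∀ n : ℕ, N ≤ n → 4 ∣ n →
      ∀ c : ZMod n → Fin 2, (2 / 33 : ℝ) * (n : ℝ) ^ 2 ≤ (monoAPCount n 4 c : ℝ) := by
  refine ⟨1, fun n hn _ c => ?_⟩
  have : NeZero n := ⟨by omega⟩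
  exact m4_lower_bound_div_four_general c
end

section
/- For every ε > 0 there exists N such that for every odd integer n ≥ N there exists a 2-coloring c of Z_n with M_4(n,c) ≤ (17/150 + ε)·n². -/
/-!
Cut `Z_{20q}` into 20 blocks of length `q` and color block `i` by the `i`-th letter of the word
`11101101110001001000`. Writing `a = q i + p` and `d = q j + s`, the term `a + l d` lies in block
`i + l j + e_l` with carry `e_l = ⌊(p + l s) / q⌋`, so for fixed `(p, s)` counting monochromatic
progressions is a finite problem about `(i, j)`. The carries `e₁, e₂, e₃` grow by `0` or `1` at each
step, and a computation shows that at most 36 pairs `(i, j)` survive when `e₃ ∈ {0, 3}` and at most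
50 when `e₃ ∈ {1, 2}`. The latter happens for about two thirds of all `(p, s)`, which gives the
density `(36 / 3 + 50 * 2 / 3) / 400 = 17 / 150`.

Passing from `Z_{20q}` to `Z_n` with `20 q ≤ n < 20 q + 20` moves each term by a bounded amount, so
it affects only progressions with a difference or term in a set of bounded size, namely `O(n)` of
them.
-/

open Finset

section Transfer

variable {N : ℕ} [NeZero N] {α : Type*} [DecidableEq α]

/-- The boundary of a coloring of the cycle `Z_N`: the elements colored differently from their
successors. -/
def colorChanges (c : ZMod N → α) : Finset (ZMod N) := {x | c (x + 1) ≠ c x}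

lemma exists_add_mem_colorChanges {c : ZMod N → α} {x : ZMod N} {s : ℕ} (h : c (x + s) ≠ c x) :
    ∃ r < s, x + r ∈ colorChanges c := by
  contrapose! h
  induction s with
  | zero => simp
  | succ s ih =>
    have hlast : c (x + s + 1) = c (x + s) := by simpa [colorChanges] using h s s.lt_succ_self
    rw [Nat.cast_succ, ← add_assoc, hlast, ih fun r hr => h r (hr.trans s.lt_succ_self)]

lemma card_exists_shift_ne_le (c : ZMod N → α) (S : ℕ) :
    #{x : ZMod N | ∃ s ≤ S, c (x + s) ≠ c x} ≤ #(colorChanges c) * S := by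
  calc _ ≤ #(image₂ (fun y (r : ℕ) => y - (r : ZMod N)) (colorChanges c) (range S)) := by
        refine card_le_card fun x hx => ?_
        obtain ⟨s, hs, hne⟩ := (mem_filter.1 hx).2
        obtain ⟨r, hr, hmem⟩ := exists_add_mem_colorChanges hne
        exact mem_image₂.2 ⟨x + r, hmem, r, mem_range.2 (hr.trans_le hs), add_sub_cancel_right _ _⟩
    _ ≤ _ := by simpa using card_image₂_le (fun y (r : ℕ) => y - (r : ZMod N)) _ (range S)

/-- The elements of `Z_{N+t}` that are not in `[0, N)`, or whose color under `c` changes after some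
displacement by at most `S`. A progression without difference or terms in this set can be moved to
`Z_N`, as long as its terms are displaced by at most `S`. -/
def unstable (c : ZMod N → α) (t S : ℕ) : Finset (ZMod (N + t)) :=
  {x | N ≤ x.val ∨ ∃ s ≤ S, c (x.val + s) ≠ c x.val}

lemma notMem_unstable {c : ZMod N → α} {t S : ℕ} {x : ZMod (N + t)} :
    x ∉ unstable c t S ↔ x.val < N ∧ ∀ s ≤ S, c (x.val + s) = c x.val := by
  simp [unstable]

lemma card_unstable_le (c : ZMod N → α) (t S : ℕ) :
    #(unstable c t S) ≤ #(colorChanges c) * S + t := by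
  let V : Finset (ZMod N) := {y | ∃ s ≤ S, c (y + s) ≠ c y}
  calc _ ≤ #(V.image (fun y => (y.val : ZMod (N + t))) ∪
          (Ico N (N + t)).image (Nat.cast : ℕ → ZMod (N + t))) := by
        refine card_le_card fun x hx => ?_
        rcases lt_or_ge x.val N with hlt | hge
        · have hV := (mem_filter.1 hx).2.resolve_left hlt.not_ge
          refine mem_union_left _ (mem_image.2 ⟨_, mem_filter.2 ⟨mem_univ _, hV⟩, ?_⟩)
          rw [ZMod.val_cast_of_lt hlt, ZMod.natCast_zmod_val]
        · exact mem_union_right _ (mem_image.2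
            ⟨x.val, mem_Ico.2 ⟨hge, x.val_lt⟩, ZMod.natCast_zmod_val x⟩)
    _ ≤ #V + t := (card_union_le _ _).trans
        (add_le_add card_image_le (card_image_le.trans_eq (by simp)))
    _ ≤ _ := Nat.add_le_add_right (card_exists_shift_ne_le c S) t

lemma card_progressions_meeting_le {G : Type*} [AddGroup G] [Fintype G] [DecidableEq G]
    (X : Finset G) (k : ℕ) :
    #{p : G × G | p.2 ∈ X ∨ ∃ l < k, p.1 + l • p.2 ∈ X} ≤ (k + 1) * (#X * Fintype.card G) := by
  let meeting (l : ℕ) : Finset (G × G) := (X ×ˢ univ).image fun y => (y.1 - l • y.2, y.2)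
  have hmeeting (l : ℕ) : #(meeting l) ≤ #X * Fintype.card G :=
    card_image_le.trans_eq (by rw [card_product, card_univ])
  calc _ ≤ #((range k).biUnion meeting ∪ univ ×ˢ X) := by
        refine card_le_card fun p hp => ?_
        rcases (mem_filter.1 hp).2 with hd | ⟨l, hl, hterm⟩
        · exact mem_union_right _ (mem_product.2 ⟨mem_univ _, hd⟩)
        · refine mem_union_left _ (mem_biUnion.2 ⟨l, mem_range.2 hl, mem_image.2 ?_⟩)
          exact ⟨(p.1 + l • p.2, p.2), by simpa using hterm, by simp⟩
    _ ≤ #((range k).biUnion meeting) + #(univ ×ˢ X : Finset (G × G)) := card_union_le _ _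
    _ ≤ k * (#X * Fintype.card G) + #X * Fintype.card G := by
        gcongr
        · simpa using card_biUnion_le_card_mul (range k) meeting _ fun l _ => hmeeting l
        · rw [card_product, card_univ, mul_comm]
    _ = _ := by ring

lemma exists_natCast_val_add_nsmul (t l : ℕ) (a d : ZMod (N + t)) :
    ∃ w ≤ l, (a.val : ZMod N) + l • (d.val : ZMod N) =
      ((a + l • d).val : ZMod N) + (w * t : ℕ) := by
  have hval : (a + l • d).val = (a.val + l * d.val) % (N + t) := by
    rw [← ZMod.val_natCast]; simp
  refine ⟨(a.val + l * d.val) / (N + t), ?_, ?_⟩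
  · refine Nat.le_of_lt_succ ((Nat.div_lt_iff_lt_mul (NeZero.pos _)).2 ?_)
    nlinarith [a.val_lt, d.val_lt]
  · have hdiv := congrArg (Nat.cast : ℕ → ZMod N) (Nat.mod_add_div (a.val + l * d.val) (N + t))
    rw [← hval] at hdiv
    push_cast at hdiv ⊢
    rw [nsmul_eq_mul, ← hdiv, ZMod.natCast_self]
    ring

lemma eq_of_natCast_val_eq {t : ℕ} {x y : ZMod (N + t)} (hx : x.val < N) (hy : y.val < N)
    (h : (x.val : ZMod N) = y.val) : x = y := by
  apply ZMod.val_injective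
  rw [← ZMod.val_cast_of_lt hx, h, ZMod.val_cast_of_lt hy]

theorem monoAPCount_natCast_val_le {k : ℕ} (hk : 0 < k) (t : ℕ) (c : ZMod N → Fin 2) :
    monoAPCount (N + t) k (fun x => c x.val) ≤
      monoAPCount N k c + (k + 1) * ((#(colorChanges c) * (k * t) + t) * (N + t)) := by
  let U := unstable c t (k * t)
  let bad : Finset (ZMod (N + t) × ZMod (N + t)) := {p | p.2 ∈ U ∨ ∃ l < k, p.1 + l • p.2 ∈ U}
  have hbad : #bad ≤ (k + 1) * ((#(colorChanges c) * (k * t) + t) * (N + t)) := by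
    refine (card_progressions_meeting_le U k).trans ?_
    rw [ZMod.card]
    gcongr
    exact card_unstable_le c t (k * t)
  have good_of_notMem {p : ZMod (N + t) × ZMod (N + t)} (hp : p ∉ bad) :
      p.1 ∉ U ∧ p.2 ∉ U ∧ ∀ l < k, p.1 + l • p.2 ∉ U := by
    have hgood : p.2 ∉ U ∧ ∀ l < k, p.1 + l • p.2 ∉ U := by simpa [bad] using hp
    exact ⟨by simpa using hgood.2 0 hk, hgood⟩
  unfold monoAPCount
  refine (Set.ncard_le_ncard_sdiff_add_ncard _ (bad : Set _)).trans
    (add_le_add ?_ (by rwa [Set.ncard_coe_finset]))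
  refine Set.ncard_le_ncard_of_injOn (fun p => ((p.1.val : ZMod N), (p.2.val : ZMod N))) ?_ ?_
  · rintro ⟨a, d⟩ ⟨hmono, hp⟩ l hl
    obtain ⟨w, hw, hterm⟩ := exists_natCast_val_add_nsmul t l a d
    have hstable := (notMem_unstable.1 ((good_of_notMem hp).2.2 l hl)).2
    have hshift : w * t ≤ k * t := Nat.mul_le_mul_right t (hw.trans hl.le)
    exact (congrArg c hterm).trans ((hstable _ hshift).trans (hmono l hl))
  · rintro ⟨a, d⟩ ⟨-, hp⟩ ⟨a', d'⟩ ⟨-, hp'⟩ h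
    obtain ⟨ha, hd⟩ := Prod.mk.inj h
    have val_lt {x : ZMod (N + t)} (hx : x ∉ U) : x.val < N := (notMem_unstable.1 hx).1
    obtain ⟨hfirst, hdiff, -⟩ := good_of_notMem hp
    obtain ⟨hfirst', hdiff', -⟩ := good_of_notMem hp'
    exact Prod.ext (eq_of_natCast_val_eq (val_lt hfirst) (val_lt hfirst') ha)
      (eq_of_natCast_val_eq (val_lt hdiff) (val_lt hdiff') hd)

end Transfer

section BlowUp

variable {m q : ℕ} {α : Type*}

/-- The coloring of `Z_{mq}` obtained from a coloring `b` of `Z_m` by replacing each element with a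
block of `q` consecutive elements of the same color. -/
def blowUp (b : ZMod m → α) (q : ℕ) (x : ZMod (m * q)) : α := b (x.val / q : ℕ)

lemma blowUp_natCast (b : ZMod m → α) (x : ℕ) : blowUp b q (x : ZMod (m * q)) = b (x / q : ℕ) := by
  rw [blowUp, ZMod.val_natCast, Nat.mod_mul_left_div_self, ZMod.natCast_mod]

variable [NeZero m] [NeZero q]

lemma card_colorChanges_blowUp_le [DecidableEq α] (b : ZMod m → α) :
    #(colorChanges (blowUp b q)) ≤ m := by
  calc _ ≤ #((Icc 1 m).image fun i => ((q * i : ℕ) : ZMod (m * q)) - 1) := by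
        refine card_le_card fun x hx => ?_
        have hx : blowUp b q (x + 1) ≠ blowUp b q x := (mem_filter.1 hx).2
        have hsucc : x + 1 = (x.val + 1 : ℕ) := by simp
        have hdvd : q ∣ x.val + 1 := by
          contrapose! hx
          rw [hsucc, blowUp_natCast, Nat.succ_div_of_not_dvd hx, blowUp]
        obtain ⟨i, hi⟩ := hdvd
        have hlt := x.val_lt
        refine mem_image.2 ⟨i, mem_Icc.2 ⟨?_, ?_⟩, ?_⟩
        · exact Nat.pos_of_ne_zero fun h => by simp [h] at hi
        · exact Nat.le_of_mul_le_mul_left (by linarith : q * i ≤ q * m)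
            (Nat.pos_of_ne_zero fun h => by simp [h] at hi)
        · rw [← hi, ← hsucc, add_sub_cancel_right]
    _ ≤ _ := card_image_le.trans_eq (by simp)

/-- The monochromatic `k`-APs of `b` whose term number `l` is displaced by the carry `e l`: this is
what a progression in the blow-up of `b` induces on the blocks. -/
def carryAPs [DecidableEq α] (b : ZMod m → α) (k : ℕ) (e : ℕ → ℕ) :
    Finset (ZMod m × ZMod m) :=
  {x | ∀ l < k, b (x.1 + l • x.2 + e l) = b x.1}

lemma add_mul_div_eq_add_carry (a d l : ℕ) :
    (a + l * d) / q = a / q + l * (d / q) + (a % q + l * (d % q)) / q := by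
  have hsplit : a + l * d = (a % q + l * (d % q)) + q * (a / q + l * (d / q)) := by
    conv_lhs => rw [← Nat.div_add_mod a q, ← Nat.div_add_mod d q]
    ring
  rw [hsplit, Nat.add_mul_div_left _ _ (NeZero.pos q), add_comm]

lemma blowUp_add_nsmul (b : ZMod m → α) (a d : ZMod (m * q)) (l : ℕ) :
    blowUp b q (a + l • d) = b ((a.val / q : ℕ) + l • ((d.val / q : ℕ) : ZMod m) +
      ((a.val % q + l * (d.val % q)) / q : ℕ)) := by
  have hcast : a + l • d = (a.val + l * d.val : ℕ) := by simp
  rw [hcast, blowUp_natCast, add_mul_div_eq_add_carry]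
  push_cast
  rw [nsmul_eq_mul]

lemma eq_of_val_mod_eq_of_natCast_val_div_eq {x y : ZMod (m * q)}
    (hmod : x.val % q = y.val % q)
    (hdiv : ((x.val / q : ℕ) : ZMod m) = (y.val / q : ℕ)) : x = y := by
  have hlt (z : ZMod (m * q)) : z.val / q < m :=
    Nat.div_lt_of_lt_mul (z.val_lt.trans_eq (mul_comm m q))
  apply ZMod.val_injective
  rw [← Nat.div_add_mod x.val q, ← Nat.div_add_mod y.val q, hmod, ← ZMod.val_cast_of_lt (hlt x),
    hdiv, ZMod.val_cast_of_lt (hlt y)]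

theorem monoAPCount_blowUp_le (k : ℕ) (b : ZMod m → Fin 2) :
    monoAPCount (m * q) k (blowUp b q) ≤
      ∑ x ∈ range q ×ˢ range q, #(carryAPs b k fun l => (x.1 + l * x.2) / q) := by
  rw [← card_sigma, ← Set.ncard_coe_finset]
  refine Set.ncard_le_ncard_of_injOn (fun p => ⟨(p.1.val % q, p.2.val % q),
    ((p.1.val / q : ℕ), (p.2.val / q : ℕ))⟩) ?_ ?_
  · rintro ⟨a, d⟩ hmono
    have hcarry (l : ℕ) (hl : l < k) := (blowUp_add_nsmul b a d l).symm.trans (hmono l hl)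
    exact mem_coe.2 (mem_sigma.2 ⟨mem_product.2 ⟨mem_range.2 (Nat.mod_lt _ (NeZero.pos q)),
      mem_range.2 (Nat.mod_lt _ (NeZero.pos q))⟩, mem_filter.2 ⟨mem_univ _, hcarry⟩⟩)
  · rintro ⟨a, d⟩ - ⟨a', d'⟩ - h
    simp only [Sigma.mk.injEq, Prod.mk.injEq, heq_eq_eq] at h
    obtain ⟨⟨ha, hd⟩, ha', hd'⟩ := h
    exact Prod.ext (eq_of_val_mod_eq_of_natCast_val_div_eq ha ha')
      (eq_of_val_mod_eq_of_natCast_val_div_eq hd hd')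

end BlowUp

/-- The coloring of `Z_20` given by the word `11101101110001001000`, whose blow-ups have few
monochromatic `4`-APs. -/
def blockPattern : ZMod 20 → Fin 2 :=
  ![1, 1, 1, 0, 1, 1, 0, 1, 1, 1, 0, 0, 0, 1, 0, 0, 1, 0, 0, 0]

lemma card_carryAPs_blockPattern_le_of_increments : ∀ x < 2, ∀ y < 2, ∀ z < 2,
    #(carryAPs blockPattern 4 fun l => [0, x, x + y, x + y + z].getD l 0) ≤
      if x + y + z = 0 ∨ x + y + z = 3 then 36 else 50 := by
  decide +kernel

lemma add_div_eq_div_add_zero_or_one {q s : ℕ} (hs : s < q) (a : ℕ) :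
    ∃ x < 2, (a + s) / q = a / q + x := by
  have hq : 0 < q := s.zero_le.trans_lt hs
  have hle : a / q ≤ (a + s) / q := Nat.div_le_div_right (Nat.le_add_right a s)
  have hge : (a + s) / q ≤ a / q + 1 := by
    rw [← Nat.add_div_right a hq]
    exact Nat.div_le_div_right (by omega)
  exact ⟨(a + s) / q - a / q, by omega, by omega⟩

lemma card_carryAPs_blockPattern_le {q p s : ℕ} (hp : p < q) (hs : s < q) :
    #(carryAPs blockPattern 4 fun l => (p + l * s) / q) ≤
      if (p + 3 * s) / q ∈ Ioo 0 3 then 50 else 36 := by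
  obtain ⟨x, hx, h₁⟩ := add_div_eq_div_add_zero_or_one hs p
  obtain ⟨y, hy, h₂⟩ := add_div_eq_div_add_zero_or_one hs (p + s)
  obtain ⟨z, hz, h₃⟩ := add_div_eq_div_add_zero_or_one hs (p + s + s)
  rw [Nat.div_eq_of_lt hp, zero_add] at h₁
  rw [h₁] at h₂
  rw [h₂] at h₃
  have hthree : (p + 3 * s) / q = x + y + z := by rw [← h₃]; ring_nf
  have hcarry : ∀ l < 4, (p + l * s) / q = [0, x, x + y, x + y + z].getD l 0 := by
    intro l hl
    interval_cases l
    · simpa using Nat.div_eq_of_lt hp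
    · simpa using h₁
    · simpa [two_mul, add_assoc] using h₂
    · exact hthree
  have hcongr : carryAPs blockPattern 4 (fun l => (p + l * s) / q) =
      carryAPs blockPattern 4 fun l => [0, x, x + y, x + y + z].getD l 0 :=
    filter_congr fun _ _ => forall₂_congr fun l hl => by simp only [hcarry l hl]
  rw [hcongr, hthree]
  refine (card_carryAPs_blockPattern_le_of_increments x hx y hy z hz).trans_eq ?_
  simp only [mem_Ioo]
  split_ifs <;> omega

lemma three_mul_card_middle_carry_le (q : ℕ) :
    3 * #{x ∈ range q ×ˢ range q | (x.1 + 3 * x.2) / q ∈ Ioo 0 3} ≤ q * (2 * q + 2) := by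
  have hcol (p : ℕ) : 3 * #{s ∈ range q | (p + 3 * s) / q ∈ Ioo 0 3} ≤ 2 * q + 2 := by
    have hsub : {s ∈ range q | (p + 3 * s) / q ∈ Ioo 0 3} ⊆
        Ico ((q - p + 2) / 3) ((3 * q - p + 2) / 3) := by
      intro s hs
      obtain ⟨hs, hcarry⟩ := mem_filter.1 hs
      have hq : 0 < q := s.zero_le.trans_lt (mem_range.1 hs)
      rw [mem_Ioo, Nat.div_pos_iff, Nat.div_lt_iff_lt_mul hq] at hcarry
      rw [mem_Ico]
      omega
    have hcard := card_le_card hsub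
    rw [Nat.card_Ico] at hcard
    omega
  rw [card_filter, sum_product, mul_sum]
  simp_rw [← card_filter]
  simpa using sum_le_card_nsmul (range q) _ _ fun p _ => hcol p

lemma three_mul_monoAPCount_blowUp_blockPattern_le (q : ℕ) [NeZero q] :
    3 * monoAPCount (20 * q) 4 (blowUp blockPattern q) ≤ 136 * q ^ 2 + 28 * q := by
  calc _ ≤ 3 * ∑ x ∈ range q ×ˢ range q, if (x.1 + 3 * x.2) / q ∈ Ioo 0 3 then 50 else 36 := by
        gcongr
        refine (monoAPCount_blowUp_le 4 blockPattern).trans (sum_le_sum fun x hx => ?_)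
        obtain ⟨hp, hs⟩ := mem_product.1 hx
        exact card_carryAPs_blockPattern_le (mem_range.1 hp) (mem_range.1 hs)
    _ = 108 * q ^ 2 +
          14 * (3 * #{x ∈ range q ×ˢ range q | (x.1 + 3 * x.2) / q ∈ Ioo 0 3}) := by
        have hcompl := card_filter_add_card_filter_not (s := range q ×ˢ range q)
          fun x => (x.1 + 3 * x.2) / q ∈ Ioo 0 3
        rw [card_product, card_range] at hcompl
        rw [sum_ite, sum_const, sum_const, smul_eq_mul, smul_eq_mul]
        linarith
    _ ≤ 108 * q ^ 2 + 14 * (q * (2 * q + 2)) := by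
        grw [three_mul_card_middle_carry_le q]
    _ = _ := by ring

theorem exists_three_mul_monoAPCount_four_le {n : ℕ} (hn : 20 ≤ n) :
    ∃ c : ZMod n → Fin 2,
      3 * monoAPCount n 4 c ≤ 136 * (n / 20) ^ 2 + 28 * (n / 20) + 23085 * n := by
  obtain ⟨q, t, ht, rfl⟩ : ∃ q t, t < 20 ∧ n = 20 * q + t :=
    ⟨n / 20, n % 20, Nat.mod_lt _ (by norm_num), (Nat.div_add_mod n 20).symm⟩
  have : NeZero q := ⟨by omega⟩
  have htransfer := monoAPCount_natCast_val_le (k := 4) (by norm_num) t (blowUp blockPattern q)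
  have hmain := three_mul_monoAPCount_blowUp_blockPattern_le q
  have herror : (4 + 1) * ((#(colorChanges (blowUp blockPattern q)) * (4 * t) + t) *
      (20 * q + t)) ≤ (4 + 1) * ((20 * (4 * 19) + 19) * (20 * q + t)) := by
    gcongr
    · exact card_colorChanges_blowUp_le blockPattern
    all_goals omega
  rw [show (20 * q + t) / 20 = q by omega]
  exact ⟨fun x => blowUp blockPattern q x.val, by omega⟩

theorem m4_upper_bound_odd_general :
    ∀ ε : ℝ, 0 < ε → ∃ N : ℕ, ∀ n : ℕ, N ≤ n →
      ∃ c : ZMod n → Fin 2, (monoAPCount n 4 c : ℝ) ≤ (17 / 150 + ε) * (n : ℝ) ^ 2 := by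
  intro ε hε
  obtain ⟨N, hN⟩ := exists_nat_gt (7696 / ε)
  refine ⟨max N 20, fun n hn => ?_⟩
  obtain ⟨c, hc⟩ := exists_three_mul_monoAPCount_four_le ((le_max_right N 20).trans hn)
  refine ⟨c, ?_⟩
  have hc : 3 * (monoAPCount n 4 c : ℝ) ≤
      136 * ((n / 20 : ℕ) : ℝ) ^ 2 + 28 * (n / 20 : ℕ) + 23085 * n := mod_cast hc
  have hq : ((n / 20 : ℕ) : ℝ) ≤ n / 20 := Nat.cast_div_le
  have hsq : ((n / 20 : ℕ) : ℝ) ^ 2 ≤ (n / 20 : ℝ) ^ 2 := by gcongr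
  have hlinear : 7696 * (n : ℝ) ≤ ε * n * n := by
    have hNn : (N : ℝ) ≤ n := mod_cast (le_max_left N 20).trans hn
    gcongr
    exact ((div_lt_iff₀' hε).1 (hN.trans_le hNn)).le
  linarith

theorem m4_upper_bound_odd :
    ∀ ε : ℝ, 0 < ε → ∃ N : ℕ, ∀ n : ℕ, N ≤ n → Odd n →
      ∃ c : ZMod n → Fin 2, (monoAPCount n 4 c : ℝ) ≤ (17 / 150 + ε) * (n : ℝ) ^ 2 := fun ε hε =>
  (m4_upper_bound_odd_general ε hε).imp fun _ hN n hn _ => hN n hn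
end

section
/- For every ε > 0 there exists N such that for every odd integer n ≥ N there exists a 2-coloring c of Z_n with M_5(n,c) ≤ (3629/65712 + ε)·n². -/
/-! Color `x ∈ Z_n` by `P ⌊b x / n⌋` for a `b`-periodic word `P`. Whether a `k`-AP `(A, D)` is
monochromatic depends only on its itinerary, the sequence `y` of the blocks it visits. Put
`δ = b L D / n`. On the scale where a block has length `L`, the starting points with itinerary
`y` fill the intersection of the intervals `[L y_l - l δ, L y_l + L - l δ)`, `l < k`. If `L` is
divisible by `1, …, k - 1`, then the order of the left endpoints can change only at integers `δ`,
so for `δ ∈ [q, q + 1]` the length of the intersection is the positive part of an affine function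
of `δ`. Being convex, it is at most the linear interpolation of its values at `q` and `q + 1`,
which are exact counts for `Z_{bL}`. Hence the density of monochromatic `k`-APs in `Z_n` exceeds
that in `Z_{bL}` by at most `O(1 / n)`. A word of period `44` with `L = 12` has
`14112 = 49 / 968 * 528 ^ 2` monochromatic `5`-APs in `Z_528`. -/

open Finset Filter

theorem sum_range_add_div {n : ℕ} (hn : 0 < n) (N : ℕ) : ∑ u ∈ range n, (N + u) / n = N := by
  induction N with
  | zero => exact sum_eq_zero fun u hu => by simpa using Nat.div_eq_of_lt (mem_range.1 hu)
  | succ N ih =>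
    have h := (sum_range_succ' (fun u => (N + u) / n) n).symm.trans (sum_range_succ _ n)
    rw [ih, add_zero, Nat.add_div_right N hn] at h
    simp only [add_right_comm N 1, add_assoc] at h ⊢
    omega

theorem mul_card_le_of_modEq {ι : Type*} {s : Finset ι} {f : ι → ℤ} {m v lo hi : ℤ} (hm : 0 < m)
    (hf : Set.InjOn f s) (hmem : ∀ x ∈ s, f x ∈ Ico lo hi) (hmod : ∀ x ∈ s, f x ≡ v [ZMOD m]) :
    m * #s ≤ max (hi - lo) 0 + m := by
  have hcard : (#s : ℤ) ≤ max (⌈((hi - v : ℤ) : ℚ) / m⌉ - ⌈((lo - v : ℤ) : ℚ) / m⌉) 0 := by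
    push_cast
    rw [← Int.Ico_filter_modEq_card lo hi hm v]
    exact_mod_cast card_le_card_of_injOn f
      (fun x hx => mem_coe.2 (mem_filter.2 ⟨hmem x hx, hmod x hx⟩)) hf
  have hm' : (0 : ℚ) < m := by exact_mod_cast hm
  have hhi : m * ⌈((hi - v : ℤ) : ℚ) / m⌉ < hi - v + m := by
    have := (mul_lt_mul_iff_right₀ hm').2 (Int.ceil_lt_add_one (((hi - v : ℤ) : ℚ) / m))
    rw [mul_add, mul_div_cancel₀ _ hm'.ne', mul_one] at this
    exact_mod_cast this
  have hlo : lo - v ≤ m * ⌈((lo - v : ℤ) : ℚ) / m⌉ := by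
    have := (div_le_iff₀' hm').1 (Int.le_ceil (((lo - v : ℤ) : ℚ) / m))
    exact_mod_cast this
  calc m * #s ≤ m * max (⌈((hi - v : ℤ) : ℚ) / m⌉ - ⌈((lo - v : ℤ) : ℚ) / m⌉) 0 := by gcongr
    _ = max (m * ⌈((hi - v : ℤ) : ℚ) / m⌉ - m * ⌈((lo - v : ℤ) : ℚ) / m⌉) 0 := by
      rw [mul_max_of_nonneg _ _ hm.le, mul_sub, mul_zero]
    _ ≤ max (hi - lo) 0 + m := by omega

theorem mul_card_filter_div_mod_eq_le {m n : ℕ} (hm : 0 < m) (hn : 0 < n) (u q : ℕ) :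
    m * #{D ∈ range n | (m * D + u) / n % m = q} ≤ n + m := by
  have hinj : Set.InjOn (fun D : ℕ => (((m * D + u) % (m * n) : ℕ) : ℤ))
      ({D ∈ range n | (m * D + u) / n % m = q} : Finset ℕ) := by
    intro D hD D' hD' h
    have hmod : m * D + u ≡ m * D' + u [MOD m * n] := Int.natCast_inj.1 h
    exact ((Nat.ModEq.add_right_cancel' u hmod).mul_left_cancel' hm.ne').eq_of_lt_of_lt
      (mem_range.1 (mem_filter.1 hD).1) (mem_range.1 (mem_filter.1 hD').1)
  have h := mul_card_le_of_modEq (m := m) (v := u) (lo := (n * q : ℕ)) (hi := (n * q + n : ℕ))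
    (by exact_mod_cast hm) hinj ?_ ?_
  · push_cast at h
    rw [add_sub_cancel_left, max_eq_left (Nat.cast_nonneg n)] at h
    exact_mod_cast h
  · intro D hD
    obtain ⟨-, rfl⟩ := mem_filter.1 hD
    rw [mul_comm m n, ← Nat.mod_mul_right_div_self, mem_Ico, Nat.cast_le, Nat.cast_lt]
    exact ⟨Nat.mul_div_le _ _, Nat.lt_mul_div_succ _ hn⟩
  · intro D _
    rw [Int.natCast_modEq_iff, Nat.ModEq, Nat.mod_mul_right_mod, Nat.mul_add_mod]

theorem mul_sum_range_div_le {f : ℕ → ℕ} {m n : ℕ} (hf : f.Periodic m) (hm : 0 < m)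
    (hn : 0 < n) (u : ℕ) :
    m * ∑ D ∈ range n, f ((m * D + u) / n) ≤ (n + m) * ∑ q ∈ range m, f q :=
  calc m * ∑ D ∈ range n, f ((m * D + u) / n)
      = m * ∑ D ∈ range n, f ((m * D + u) / n % m) := by simp only [hf.map_mod_nat]
    _ = ∑ q ∈ range m, m * #{D ∈ range n | (m * D + u) / n % m = q} * f q := by
      rw [← sum_fiberwise_of_maps_to' (t := range m) fun D _ => mem_range.2 (Nat.mod_lt _ hm)]
      simp [mul_sum, mul_assoc]
    _ ≤ ∑ q ∈ range m, (n + m) * f q := by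
      gcongr with q
      exact mul_card_filter_div_mod_eq_le hm hn u q
    _ = (n + m) * ∑ q ∈ range m, f q := (mul_sum ..).symm

theorem le_mul_and_le_mul_add_one_of_dvd {a m q : ℤ} (hdvd : m ∣ a)
    (h : 2 * a ≤ m * (2 * q + 1)) : a ≤ m * q ∧ a ≤ m * (q + 1) := by
  obtain ⟨w, rfl⟩ := hdvd
  rcases lt_trichotomy m 0 with hm | rfl | hm
  · have : q < w := by nlinarith
    constructor <;> nlinarith
  · simp
  · have : w ≤ q := by nlinarith
    constructor <;> nlinarith

section Itinerary

variable {k : ℕ}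

/-- The sequence of blocks visited by the progression `A, A + D, …, A + (k - 1) D`, where block `x`
consists of the `p` with `⌊b p / n⌋ = x`. Nothing is reduced modulo `n`, so the block indices may
exceed `b`. For `b = 1` these are the carries out of `range n`. -/
def itinerary (b n k A D : ℕ) (i : Fin k) : ℕ := b * (A + i * D) / n

theorem itinerary_mul_add {b L : ℕ} (hb : 0 < b) (hL : 0 < L) (x v y u : ℕ) (i : Fin k) :
    itinerary b (b * L) k (L * x + v) (L * y + u) i = x + i * y + itinerary 1 L k v u i := by
  have h : L * x + v + i * (L * y + u) = v + i * u + L * (x + i * y) := by ring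
  rw [itinerary, itinerary, Nat.mul_div_mul_left _ _ hb, h, Nat.add_mul_div_left _ _ hL, one_mul,
    add_comm]

/-- The starting points in `range n` of the progressions of difference `D` with itinerary `y`. -/
def itineraryFiber (b n D : ℕ) (y : Fin k → ℕ) : Finset ℕ :=
  {A ∈ range n | itinerary b n k A D = y}

/-- As `i - j` divides `L`, a tie `L * y i - i * t = L * y j - j * t` with `i ≠ j` forces `t` to be
an integer, so the order at the midpoint `q + 1 / 2` persists weakly at `q` and at `q + 1`. -/
theorem exists_min_max_index [NeZero k] {L : ℕ} (hL : ∀ m ∈ Ico 1 k, m ∣ L)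
    (y : Fin k → ℕ) (q : ℤ) :
    ∃ i j : Fin k, ∀ q' : ℤ, q' = q ∨ q' = q + 1 → ∀ l : Fin k,
      (L * y i - i * q' ≤ L * y l - l * q') ∧ (L * y l - l * q' ≤ L * y j - j * q') := by
  have hdvd (i j : Fin k) : (i - j : ℤ) ∣ L * y i - L * y j := by
    rcases eq_or_ne i j with rfl | hij
    · simp
    rw [← mul_sub, ← Int.natAbs_dvd]
    exact (Int.natCast_dvd_natCast.2 (hL _ (mem_Ico.2 (by omega)))).mul_right _
  have hle {i j : Fin k}
      (h : 2 * (L * y i : ℤ) - i * (2 * q + 1) ≤ 2 * (L * y j) - j * (2 * q + 1)) {q' : ℤ}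
      (hq' : q' = q ∨ q' = q + 1) : (L * y i - i * q' : ℤ) ≤ L * y j - j * q' := by
    have := le_mul_and_le_mul_add_one_of_dvd (hdvd i j) (q := q) (by linarith)
    rcases hq' with rfl | rfl <;> linarith
  obtain ⟨i, -, hi⟩ := exists_min_image univ
    (fun l : Fin k => (2 * (L * y l) - l * (2 * q + 1) : ℤ)) univ_nonempty
  obtain ⟨j, -, hj⟩ := exists_max_image univ
    (fun l : Fin k => (2 * (L * y l) - l * (2 * q + 1) : ℤ)) univ_nonempty
  exact ⟨i, j, fun q' hq' l => ⟨hle (hi l (mem_univ l)) hq', hle (hj l (mem_univ l)) hq'⟩⟩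

theorem mul_card_itineraryFiber_le {b L n : ℕ} (hb : 0 < b) (hL : 0 < L) (hn : 0 < n) (D : ℕ)
    (y : Fin k → ℕ) (i j : Fin k) :
    (b * L * #(itineraryFiber b n D y) : ℤ) ≤
      max (n * (L * y i + L - L * y j) + (j - i) * (b * L * D) : ℤ) 0 + b * L := by
  have h := mul_card_le_of_modEq (s := itineraryFiber b n D y) (f := fun A => b * L * A)
    (m := b * L) (v := 0) (lo := n * (L * y j) - j * (b * L * D))
    (hi := n * (L * y i + L) - i * (b * L * D)) (by positivity) ?_ ?_ ?_
  · exact h.trans_eq (by ring_nf)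
  · intro A _ A' _ h
    exact Int.natCast_inj.1 (mul_left_cancel₀ (by positivity) h)
  · intro A hA
    have hy (l : Fin k) : n * y l ≤ b * (A + l * D) ∧ b * (A + l * D) < n * (y l + 1) := by
      rw [← (mem_filter.1 hA).2]
      exact ⟨Nat.mul_div_le _ _, Nat.lt_mul_div_succ _ hn⟩
    have hlo := Nat.mul_le_mul_left L (hy j).1
    have hhi := Nat.mul_lt_mul_of_pos_left (hy i).2 hL
    zify at hlo hhi
    rw [mem_Ico]
    constructor <;> linarith
  · intro A _
    exact Int.modEq_zero_iff_dvd.2 (dvd_mul_right _ _)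

theorem le_card_itineraryFiber [NeZero k] {b L q : ℕ} (hb : 0 < b) (hL : 0 < L) {y : Fin k → ℕ}
    (hy : y 0 < b) {i j : Fin k}
    (hij : ∀ l : Fin k, (L * y i - i * q : ℤ) ≤ L * y l - l * q ∧
      (L * y l - l * q : ℤ) ≤ L * y j - j * q) :
    (L * y i + L - L * y j + (j - i) * q : ℤ) ≤ #(itineraryFiber b (b * L) q y) := by
  have hsub : Ico (L * y j - j * q) (L * y i + L - i * q) ⊆ itineraryFiber b (b * L) q y := by
    intro p hp
    rw [mem_Ico] at hp
    have hdiv (l : Fin k) : L * y l ≤ p + l * q ∧ p + l * q < L * y l + L := by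
      have := hij l
      zify
      omega
    refine mem_filter.2 ⟨mem_range.2 ?_, funext fun l => ?_⟩
    · have := Nat.mul_le_mul_left L (Nat.succ_le_of_lt hy)
      have := hdiv 0
      simp only [Fin.val_zero, zero_mul, add_zero] at this
      nlinarith
    · rw [itinerary, Nat.mul_div_mul_left _ _ hb]
      exact Nat.div_eq_of_lt_le (by linarith [hdiv l]) (by linarith [hdiv l])
  have hcard := card_le_card hsub
  rw [Nat.card_Ico] at hcard
  have h0 := (hij 0).2
  simp only [Fin.val_zero, Nat.cast_zero, zero_mul, sub_zero] at h0
  have : (0 : ℤ) ≤ L * y 0 := by positivity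
  rw [sub_mul]
  zify at *
  omega

/-- By `sum_range_add_div`, the mean over `u` of the values at `⌊(b L D + u) / n⌋ ∈ {q, q + 1}` is
the linear interpolation at `b L D / n`. -/
theorem mul_card_itineraryFiber_le_sum [NeZero k] {b L n : ℕ} (hb : 0 < b) (hL : 0 < L)
    (hdvd : ∀ m ∈ Ico 1 k, m ∣ L) (hn : 0 < n) (D : ℕ) {y : Fin k → ℕ} (hy : y 0 < b) :
    b * L * #(itineraryFiber b n D y) ≤
      ∑ u ∈ range n, #(itineraryFiber b (b * L) ((b * L * D + u) / n) y) + b * L := by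
  obtain ⟨i, j, hij⟩ := exists_min_max_index hdvd y ((b * L * D / n : ℕ) : ℤ)
  have hfiber (u : ℕ) (hu : u ∈ range n) :
      (L * y i + L - L * y j + (j - i) * ((b * L * D + u) / n : ℕ) : ℤ) ≤
        #(itineraryFiber b (b * L) ((b * L * D + u) / n) y) := by
    refine le_card_itineraryFiber hb hL hy (hij _ ?_)
    have hlo : b * L * D / n ≤ (b * L * D + u) / n := Nat.div_le_div_right (Nat.le_add_right _ _)
    have hhi : (b * L * D + u) / n ≤ b * L * D / n + 1 := by
      rw [← Nat.add_div_right _ hn]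
      exact Nat.div_le_div_right (Nat.add_le_add_left (mem_range.1 hu).le _)
    omega
  have hsum : (n * (L * y i + L - L * y j) + (j - i) * (b * L * D) : ℤ) ≤
      ∑ u ∈ range n, (#(itineraryFiber b (b * L) ((b * L * D + u) / n) y) : ℤ) :=
    calc (n * (L * y i + L - L * y j) + (j - i) * (b * L * D) : ℤ)
        = ∑ u ∈ range n, (L * y i + L - L * y j + (j - i) * ((b * L * D + u) / n : ℕ) : ℤ) := by
          rw [sum_add_distrib, ← mul_sum, ← Nat.cast_sum, sum_range_add_div hn]
          simp only [sum_const, card_range, nsmul_eq_mul]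
          push_cast
          ring
      _ ≤ _ := sum_le_sum hfiber
  have h := mul_card_itineraryFiber_le hb hL hn D y i j
  have : max (n * (L * y i + L - L * y j) + (j - i) * (b * L * D) : ℤ) 0 ≤
      ∑ u ∈ range n, (#(itineraryFiber b (b * L) ((b * L * D + u) / n) y) : ℤ) :=
    max_le hsum (by positivity)
  exact_mod_cast h.trans (add_le_add_left this _)

variable {α : Type*} [DecidableEq α] [NeZero k]

/-- The starting points in `range n` of the monochromatic `k`-term progressions of difference `D`,
when block `x` has color `P x`. -/
def monoStarts (P : ℕ → α) (b n k D : ℕ) [NeZero k] : Finset ℕ :=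
  {A ∈ range n | ∀ i, P (itinerary b n k A D i) = P (itinerary b n k A D 0)}

/-- The possible monochromatic itineraries of the progressions with `A < n` and `D ≤ n`; these
never leave the first `b * k` blocks. -/
def monoItineraries (P : ℕ → α) (b k : ℕ) [NeZero k] : Finset (Fin k → ℕ) :=
  {y ∈ Fintype.piFinset fun _ => range (b * k) | y 0 < b ∧ ∀ i, P (y i) = P (y 0)}

theorem card_monoStarts_eq_sum (P : ℕ → α) {b n D : ℕ} (hb : 0 < b) (hD : D ≤ n) :
    #(monoStarts P b n k D) = ∑ y ∈ monoItineraries P b k, #(itineraryFiber b n D y) := by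
  have hmaps : ∀ A ∈ monoStarts P b n k D, itinerary b n k A D ∈ monoItineraries P b k := by
    intro A hA
    obtain ⟨hA, hmono⟩ := mem_filter.1 hA
    rw [mem_range] at hA
    refine mem_filter.2 ⟨Fintype.mem_piFinset.2 fun i => mem_range.2 ?_, ?_, hmono⟩
    · have : A + i * D < n * k := by
        linarith [Nat.mul_le_mul_left i.val hD, Nat.mul_le_mul_left n (Nat.succ_le_of_lt i.is_lt)]
      exact Nat.div_lt_of_lt_mul (by nlinarith)
    · exact Nat.div_lt_of_lt_mul (by simpa [mul_comm n] using Nat.mul_lt_mul_of_pos_left hA hb)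
  rw [card_eq_sum_card_fiberwise hmaps]
  refine sum_congr rfl fun y hy => ?_
  congr 1
  ext A
  simp only [monoStarts, itineraryFiber, mem_filter, and_assoc, and_congr_right_iff,
    and_iff_right_iff_imp]
  rintro - rfl
  exact (mem_filter.1 hy).2.2

theorem periodic_card_monoStarts {P : ℕ → α} {b n : ℕ} (hP : P.Periodic b) (hn : 0 < n) :
    (fun D => #(monoStarts P b n k D)).Periodic n := by
  intro D
  have h (A : ℕ) (i : Fin k) :
      P (itinerary b n k A (D + n) i) = P (itinerary b n k A D i) := by
    have : b * (A + i * (D + n)) = b * (A + i * D) + n * (i * b) := by ring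
    rw [itinerary, this, Nat.add_mul_div_left _ _ hn]
    exact hP.nat_mul i _
  simp only [monoStarts, h]

theorem mul_card_monoStarts_le (P : ℕ → α) {b L n D : ℕ} (hb : 0 < b) (hL : 0 < L)
    (hdvd : ∀ m ∈ Ico 1 k, m ∣ L) (hn : 0 < n) (hD : D < n) :
    b * L * #(monoStarts P b n k D) ≤
      ∑ u ∈ range n, #(monoStarts P b (b * L) k ((b * L * D + u) / n)) +
        b * L * #(monoItineraries P b k) := by
  have hM : 0 < b * L := Nat.mul_pos hb hL
  have hq (u : ℕ) (hu : u ∈ range n) : (b * L * D + u) / n ≤ b * L := by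
    rw [← Nat.lt_succ_iff]
    exact Nat.div_lt_of_lt_mul (by nlinarith [mem_range.1 hu])
  rw [card_monoStarts_eq_sum P hb hD.le,
    sum_congr rfl fun u hu => card_monoStarts_eq_sum P hb (hq u hu), sum_comm, mul_sum,
    mul_comm (b * L) #_, ← smul_eq_mul #_, ← sum_const, ← sum_add_distrib]
  exact sum_le_sum fun y hy =>
    mul_card_itineraryFiber_le_sum hb hL hdvd hn D (mem_filter.1 hy).2.1

theorem sq_mul_sum_card_monoStarts_le {P : ℕ → α} {b L n : ℕ} (hP : P.Periodic b) (hb : 0 < b)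
    (hL : 0 < L) (hdvd : ∀ m ∈ Ico 1 k, m ∣ L) (hn : 0 < n) :
    (b * L) ^ 2 * ∑ D ∈ range n, #(monoStarts P b n k D) ≤
      n * (n + b * L) * ∑ q ∈ range (b * L), #(monoStarts P b (b * L) k q) +
        n * (b * L) ^ 2 * #(monoItineraries P b k) := by
  have hM : 0 < b * L := Nat.mul_pos hb hL
  calc (b * L) ^ 2 * ∑ D ∈ range n, #(monoStarts P b n k D)
      = b * L * ∑ D ∈ range n, b * L * #(monoStarts P b n k D) := by rw [← mul_sum]; ring
    _ ≤ b * L * ∑ D ∈ range n, (∑ u ∈ range n, #(monoStarts P b (b * L) k ((b * L * D + u) / n)) +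
          b * L * #(monoItineraries P b k)) := by
      gcongr with D hD
      exact mul_card_monoStarts_le P hb hL hdvd hn (mem_range.1 hD)
    _ = ∑ u ∈ range n, b * L * ∑ D ∈ range n, #(monoStarts P b (b * L) k ((b * L * D + u) / n)) +
          n * (b * L) ^ 2 * #(monoItineraries P b k) := by
      rw [sum_add_distrib, sum_comm, mul_add, mul_sum, sum_const, card_range, smul_eq_mul]
      ring
    _ ≤ ∑ _u ∈ range n, (n + b * L) * ∑ q ∈ range (b * L), #(monoStarts P b (b * L) k q) +
          n * (b * L) ^ 2 * #(monoItineraries P b k) :=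
      Nat.add_le_add_right (sum_le_sum fun u _ =>
        mul_sum_range_div_le (periodic_card_monoStarts hP hM) hM hn u) _
    _ = _ := by rw [sum_const, card_range, smul_eq_mul, ← mul_assoc]

/-- The pairs of a block `x.1` and a block difference `x.2` for which the progression of blocks
`x.1 + i * x.2`, perturbed by the carries `m i`, is monochromatic. -/
def monoBlocks (P : ℕ → α) (b : ℕ) (m : Fin k → ℕ) : Finset (ℕ × ℕ) :=
  {x ∈ range b ×ˢ range b | ∀ i, P (x.1 + i * x.2 + m i) = P x.1}

theorem sum_range_mul {M : Type*} [AddCommMonoid M] (f : ℕ → M) (b L : ℕ) :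
    ∑ p ∈ range (b * L), f p = ∑ x ∈ range b, ∑ v ∈ range L, f (L * x + v) := by
  induction b with
  | zero => simp
  | succ b ih => rw [sum_range_succ, ← ih, add_one_mul, sum_range_add, mul_comm b]

theorem sum_card_monoStarts_mul (P : ℕ → α) {b L : ℕ} (hb : 0 < b) (hL : 0 < L) :
    ∑ q ∈ range (b * L), #(monoStarts P b (b * L) k q) =
      ∑ w ∈ range L ×ˢ range L, #(monoBlocks P b (itinerary 1 L k w.1 w.2)) := by
  have hmono {v : ℕ} (hv : v < L) (x y u : ℕ) :
      (∀ i : Fin k, P (itinerary b (b * L) k (L * x + v) (L * y + u) i) =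
        P (itinerary b (b * L) k (L * x + v) (L * y + u) 0)) ↔
      ∀ i : Fin k, P (x + i * y + itinerary 1 L k v u i) = P x := by
    have h0 : itinerary 1 L k v u 0 = 0 := by simp [itinerary, Nat.div_eq_of_lt hv]
    simp [itinerary_mul_add hb hL, h0]
  simp only [monoStarts, monoBlocks, card_filter, sum_range_mul, sum_product]
  refine sum_comm.trans <| (sum_congr rfl fun u _ => ?_).trans sum_comm
  refine sum_comm.trans <| (sum_congr rfl fun x _ => ?_).trans sum_comm
  refine sum_comm.trans <| sum_congr rfl fun v hv => sum_congr rfl fun y _ => ?_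
  exact if_congr (hmono (mem_range.1 hv) x y u) rfl rfl

end Itinerary

theorem sum_range_natCast_zmod {M : Type*} [AddCommMonoid M] (n : ℕ) [NeZero n] (f : ZMod n → M) :
    ∑ x ∈ range n, f x = ∑ x, f x :=
  sum_nbij' (fun x => (x : ZMod n)) ZMod.val (by simp) (by simp [ZMod.val_lt])
    (fun x hx => ZMod.val_cast_of_lt (mem_range.1 hx)) (by simp) (by simp)

/-- The coloring of `Z_n` that cuts `0, …, n - 1` into `b` consecutive blocks of almost equal length
and gives block `x` the color `P x`. -/
def blockColoring (P : ℕ → Fin 2) (b n : ℕ) (x : ZMod n) : Fin 2 := P (b * x.val / n)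

theorem blockColoring_natCast {P : ℕ → Fin 2} {b n : ℕ} (hP : P.Periodic b) (hn : 0 < n) (x : ℕ) :
    blockColoring P b n x = P (b * x / n) := by
  have h : b * x = b * (x % n) + n * (x / n * b) := by
    conv_lhs => rw [← Nat.mod_add_div x n]
    ring
  rw [blockColoring, ZMod.val_natCast, h, Nat.add_mul_div_left _ _ hn]
  exact (hP.nat_mul (x / n) _).symm

theorem monoAPCount_blockColoring {P : ℕ → Fin 2} {b n k : ℕ} [NeZero k] (hP : P.Periodic b)
    (hn : 0 < n) :
    monoAPCount n k (blockColoring P b n) = ∑ D ∈ range n, #(monoStarts P b n k D) := by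
  have : NeZero n := ⟨hn.ne'⟩
  have hD (D : ℕ) : #(monoStarts P b n k D) = #{a : ZMod n | ∀ i < k,
      blockColoring P b n (a + i • (D : ZMod n)) = blockColoring P b n a} := by
    rw [monoStarts, card_filter, card_filter, ← sum_range_natCast_zmod]
    refine sum_congr rfl fun A _ => if_congr ?_ rfl rfl
    rw [Fin.forall_iff]
    simp [nsmul_eq_mul, ← Nat.cast_mul, ← Nat.cast_add, blockColoring_natCast hP hn, itinerary]
  simp only [hD]
  rw [sum_range_natCast_zmod n fun d => #{a : ZMod n | ∀ i < k,
      blockColoring P b n (a + i • d) = blockColoring P b n a}, monoAPCount,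
      Set.ncard_eq_toFinset_card']
  simp only [card_filter, ← Fintype.sum_prod_type_right']
  simp

theorem eventually_monoAPCount_blockColoring_le {P : ℕ → Fin 2} {b L k : ℕ} [NeZero k]
    (hP : P.Periodic b) (hb : 0 < b) (hL : 0 < L) (hdvd : ∀ m ∈ Ico 1 k, m ∣ L) {ε : ℝ}
    (hε : 0 < ε) :
    ∀ᶠ n : ℕ in atTop, (monoAPCount n k (blockColoring P b n) : ℝ) ≤
      (monoAPCount (b * L) k (blockColoring P b (b * L)) / (b * L) ^ 2 + ε) * n ^ 2 := by
  have hM : 0 < b * L := Nat.mul_pos hb hL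
  set T := monoAPCount (b * L) k (blockColoring P b (b * L)) with hT
  filter_upwards [eventually_gt_atTop 0,
    eventually_ge_atTop ⌈(T / (b * L) + #(monoItineraries P b k) : ℝ) / ε⌉₊] with n hn hN
  have hN' : (T / (b * L) + #(monoItineraries P b k) : ℝ) ≤ n * ε :=
    (div_le_iff₀ hε).1 (Nat.ceil_le.1 hN)
  have h : ((b * L) ^ 2 * monoAPCount n k (blockColoring P b n) : ℝ) ≤
      n * (n + b * L) * T + n * (b * L) ^ 2 * #(monoItineraries P b k) := by
    rw [hT, monoAPCount_blockColoring hP hn, monoAPCount_blockColoring hP hM]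
    exact_mod_cast sq_mul_sum_card_monoStarts_le hP hb hL hdvd hn
  have hM' : (0 : ℝ) < b * L := by exact_mod_cast hM
  calc (monoAPCount n k (blockColoring P b n) : ℝ)
      ≤ (n * (n + b * L) * T + n * (b * L) ^ 2 * #(monoItineraries P b k)) / (b * L) ^ 2 :=
        (le_div_iff₀' (pow_pos hM' 2)).2 h
    _ = T / (b * L) ^ 2 * n ^ 2 + n * (T / (b * L) + #(monoItineraries P b k)) := by
      field_simp
      ring
    _ ≤ T / (b * L) ^ 2 * n ^ 2 + n * (n * ε) := by gcongr
    _ = (T / (b * L) ^ 2 + ε) * n ^ 2 := by ring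

/-- The `44`-periodic word `0001110100010110111101 1110001011101001000010`, whose second half is the
complement of the first, as a coloring of blocks with few monochromatic `5`-APs. Its letters are
the binary digits of `4560482429112`, lowest digit first. -/
def fiveAPPattern (x : ℕ) : Fin 2 := Fin.ofNat 2 (4560482429112 >>> (x % 44))

theorem periodic_fiveAPPattern : fiveAPPattern.Periodic 44 := fun x => by
  simp only [fiveAPPattern, Nat.add_mod_right]

theorem monoAPCount_blockColoring_fiveAPPattern :
    monoAPCount (44 * 12) 5 (blockColoring fiveAPPattern 44 (44 * 12)) = 14112 := by
  rw [monoAPCount_blockColoring periodic_fiveAPPattern (by norm_num),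
    sum_card_monoStarts_mul fiveAPPattern (by norm_num) (by norm_num),
    sum_comp (fun m => #(monoBlocks fiveAPPattern 44 m)) fun w : ℕ × ℕ => itinerary 1 12 5 w.1 w.2]
  decide +kernel

theorem m5_upper_bound_odd_general :
    ∀ ε : ℝ, 0 < ε → ∃ N : ℕ, ∀ n : ℕ, N ≤ n →
      ∃ c : ZMod n → Fin 2, (monoAPCount n 5 c : ℝ) ≤ (49 / 968 + ε) * (n : ℝ) ^ 2 := by
  intro ε hε
  obtain ⟨N, hN⟩ := eventually_atTop.1 <| eventually_monoAPCount_blockColoring_le (k := 5) (L := 12)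
    periodic_fiveAPPattern (by norm_num) (by norm_num) (by decide) hε
  refine ⟨N, fun n hn => ⟨blockColoring fiveAPPattern 44 n, (hN n hn).trans_eq ?_⟩⟩
  rw [monoAPCount_blockColoring_fiveAPPattern]
  norm_num

theorem m5_upper_bound_odd :
    ∀ ε : ℝ, 0 < ε → ∃ N : ℕ, ∀ n : ℕ, N ≤ n → Odd n →
      ∃ c : ZMod n → Fin 2, (monoAPCount n 5 c : ℝ) ≤ (3629 / 65712 + ε) * (n : ℝ) ^ 2 := by
  intro ε hε
  obtain ⟨N, hN⟩ := m5_upper_bound_odd_general ε hε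
  exact ⟨N, fun n hn _ => (hN n hn).imp fun c hc => hc.trans <|
    mul_le_mul_of_nonneg_right (by linarith) (sq_nonneg _)⟩
end

section
/- For every ε > 0 there exists N such that for every even integer n ≥ N there exists a 2-coloring c of Z_n with M_5(n,c) ≤ (3647/65712 + ε)·n². -/
/-!
Cut the circle `ZMod n` into `44` arcs and colour arc `i` according to whether the two conditions
that `i` is a square modulo `11` and that `i % 4 < 2` are equivalent. A progression whose
first term and difference lie at relative positions `α, δ ∈ [0, 1)` inside arcs `A` and `D` has its
`i`-th term in arc `A + i * D + ⌊α + i * δ⌋`, and `⌊α + i * δ⌋` grows by a carry of `0` or `1` at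
each step. Hence the density of monochromatic progressions is, up to `o(1)`, the sum over the carry
patterns of the proportion of pairs `(A, D)` that are monochromatic for the pattern, times the area
of the set of `(α, δ)` producing it. Covering these sets by cells of a `120 × 120` grid bounds the
density by `1539844 / 5280 ^ 2`, which is below `3647 / 65712`.
-/

open Finset Filter Topology

namespace ArcColoring

theorem add_mul_div_eq_add_count {c : ℕ} (hc : 0 < c) (a b i : ℕ) :
    (a + i * b) / c =
      a / c + i * (b / c) + Nat.count (fun j => c ≤ (a + j * b) % c + b % c) i := by
  induction i with
  | zero => simp
  | succ i ih =>
    rw [add_one_mul, ← add_assoc, Nat.add_div hc, ih, Nat.count_succ]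
    ring

/-- The steps `j < r` at which the remainders modulo `c` carry when `b` is added to `a + j * b`. -/
def carries (a b c r : ℕ) : Finset ℕ := {j ∈ range r | c ≤ (a + j * b) % c + b % c}

/-- The number of carries before step `i`, when carries occur exactly at the steps in `t`. -/
def shift (t : Finset ℕ) (i : ℕ) : ℕ := Nat.count (· ∈ t) i

theorem shift_carries {i r : ℕ} (hi : i ≤ r) (a b c : ℕ) :
    shift (carries a b c r) i = Nat.count (fun j => c ≤ (a + j * b) % c + b % c) i := by
  rw [shift, Nat.count_eq_card_filter_range, Nat.count_eq_card_filter_range]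
  congr 1
  ext j
  simp only [carries, mem_filter, mem_range]
  grind

/-- The arc containing `z` when the circle `ZMod n` is cut into `m` consecutive arcs. -/
def arc (m : ℕ) {n : ℕ} (z : ZMod n) : ℕ := m * z.val / n

section Arc

variable {n : ℕ}

theorem arc_mul_div {K : ℕ} (hK : 0 < K) (m : ℕ) (z : ZMod n) : arc (m * K) z / K = arc m z := by
  rw [arc, Nat.div_div_eq_div_mul, mul_right_comm, Nat.mul_div_mul_right _ _ hK, arc]

variable [NeZero n]

theorem arc_lt {m : ℕ} (hm : 0 < m) (z : ZMod n) : arc m z < m :=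
  Nat.div_lt_of_lt_mul <| by
    rw [mul_comm n]
    exact Nat.mul_lt_mul_of_pos_left z.val_lt hm

theorem card_arc_eq_le {m : ℕ} (hm : 0 < m) (X : ℕ) : #{z : ZMod n | arc m z = X} ≤ n / m + 1 := by
  let lo := (X * n) ⌈/⌉ m
  have hmaps : ∀ z ∈ ({z | arc m z = X} : Finset (ZMod n)), z.val ∈ Icc lo (lo + n / m) := by
    intro z hz
    obtain ⟨hz₁, hz₂⟩ := (Nat.div_eq_iff (NeZero.pos n)).1 (mem_filter_univ z |>.1 hz)
    have hlo : X * n ≤ m * lo := (ceilDiv_le_iff_le_mul hm).1 le_rfl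
    have hlen : z.val - lo ≤ n / m := by
      rw [Nat.le_div_iff_mul_le hm, mul_comm, Nat.mul_sub]
      omega
    exact mem_Icc.2 ⟨(ceilDiv_le_iff_le_mul hm).2 hz₁, Nat.sub_le_iff_le_add'.1 hlen⟩
  calc #{z : ZMod n | arc m z = X} ≤ #(Icc lo (lo + n / m)) :=
        card_le_card_of_injOn _ hmaps (ZMod.val_injective n).injOn
    _ = n / m + 1 := by rw [Nat.card_Icc, add_assoc, Nat.add_sub_cancel_left]

end Arc

/-- The blow-up to `ZMod n` of a colouring `f` with period `m`: the arc number `j`, out of `m`,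
receives the colour `f j`. -/
def blowUp (f : ℕ → Fin 2) (m n : ℕ) (z : ZMod n) : Fin 2 := f (arc m z)

/-- The pairs `(A, D)` of residues modulo `m` for which the progression of arcs `A + i * D`, with
terms displaced by `s i`, is monochromatic. -/
def monoPairs (f : ℕ → Fin 2) (m k : ℕ) (s : ℕ → ℕ) : Finset (ℕ × ℕ) :=
  {p ∈ range m ×ˢ range m | ∀ i < k, f (p.1 + i * p.2 + s i) = f p.1}

/-- The cells `(u, v)` of the `K × K` grid on the unit square that, for each `i < k` separately,
meet the region `⌊α + i * δ⌋ = s i`. -/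
def shiftCells (K k : ℕ) (s : ℕ → ℕ) : Finset (ℕ × ℕ) :=
  {p ∈ range K ×ˢ range K | ∀ i < k,
    p.1 + i * p.2 < K * (s i + 1) ∧ K * s i ≤ p.1 + i * (p.2 + 1)}

-- For fixed `v` the admissible `u` form an interval, so evaluating this sum takes time linear in
-- `K`. Truncated subtraction clips the constraints to `0 ≤ u < K`.
theorem card_shiftCells (K k : ℕ) (s : ℕ → ℕ) :
    #(shiftCells K k s) = ∑ v ∈ range K,
      (K - ((range k).sup fun i => i * v - K * s i) -
        (range k).sup fun i => K * s i - i * (v + 1)) := by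
  rw [shiftCells, card_filter, sum_product_right]
  refine sum_congr rfl fun v _ => ?_
  rw [← card_filter, ← Nat.card_Ico]
  congr 1
  ext u
  simp only [mem_filter, mem_range, mem_Ico, Finset.sup_le_iff]
  have hupper : u < K - ((range k).sup fun i => i * v - K * s i) ↔
      u < K ∧ ∀ i < k, u + i * v < K * (s i + 1) := by
    rw [show ∀ S, u < K - S ↔ u < K ∧ S < K - u by omega, and_congr_right_iff]
    intro hu
    rw [Finset.sup_lt_iff (Nat.sub_pos_of_lt hu)]
    refine forall_congr' fun i => ?_
    rw [mem_range, mul_add_one]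
    omega
  have hlower (i : ℕ) : K * s i - i * (v + 1) ≤ u ↔ K * s i ≤ u + i * (v + 1) :=
    Nat.sub_le_iff_le_add
  simp only [hupper, hlower]
  grind

section BlowUp

variable {f : ℕ → Fin 2} {m n : ℕ} [NeZero n]

theorem blowUp_natCast (hf : f.Periodic m) (x : ℕ) : blowUp f m n x = f (m * x / n) := by
  have hx : m * x / n = m * (x % n) / n + x / n * m := by
    rw [← Nat.add_mul_div_right _ _ (NeZero.pos n)]
    congr 1
    linear_combination m * (Nat.mod_add_div x n).symm
  rw [blowUp, arc, ZMod.val_natCast, hx, ← smul_eq_mul (x / n), hf.nsmul]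

theorem blowUp_add_nsmul (hf : f.Periodic m) {i r : ℕ} (hi : i ≤ r) (a d : ZMod n) :
    blowUp f m n (a + i • d) =
      f (arc m a + i * arc m d + shift (carries (m * a.val) (m * d.val) n r) i) := by
  have hcast : a + i • d = ((a.val + i * d.val : ℕ) : ZMod n) := by simp
  rw [hcast, blowUp_natCast hf, mul_add, mul_left_comm,
    add_mul_div_eq_add_count (NeZero.pos n), shift_carries hi, arc, arc]

theorem arc_mem_monoPairs (hm : 0 < m) (hf : f.Periodic m) {k : ℕ} {a d : ZMod n}
    (h : ∀ i < k, blowUp f m n (a + i • d) = blowUp f m n a) :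
    (arc m a, arc m d) ∈
      monoPairs f m k (shift (carries (m * a.val) (m * d.val) n (k - 1))) := by
  refine mem_filter.2 ⟨mk_mem_product (mem_range.2 (arc_lt hm a)) (mem_range.2 (arc_lt hm d)), ?_⟩
  intro i hi
  rw [← blowUp_add_nsmul hf (Nat.le_sub_one_of_lt hi), h i hi, blowUp]

theorem arc_mod_mem_shiftCells {K : ℕ} (hK : 0 < K) (k : ℕ) (a d : ZMod n) :
    (arc (m * K) a % K, arc (m * K) d % K) ∈
      shiftCells K k (shift (carries (m * a.val) (m * d.val) n (k - 1))) := by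
  refine mem_filter.2 ⟨mk_mem_product (mem_range.2 (Nat.mod_lt _ hK))
    (mem_range.2 (Nat.mod_lt _ hK)), fun i hi => ?_⟩
  set s := shift (carries (m * a.val) (m * d.val) n (k - 1)) i with hs
  have hcoarse : (m * a.val + i * (m * d.val)) / n = arc m a + i * arc m d + s := by
    rw [add_mul_div_eq_add_count (NeZero.pos n), hs, shift_carries (Nat.le_sub_one_of_lt hi),
      arc, arc]
  obtain ⟨e, he, hfine⟩ : ∃ e ≤ i, (m * K * a.val + i * (m * K * d.val)) / n =
      arc (m * K) a + i * arc (m * K) d + e :=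
    ⟨_, Nat.count_le _, add_mul_div_eq_add_count (NeZero.pos n) _ _ _⟩
  have hdiv : (arc (m * K) a + i * arc (m * K) d + e) / K = arc m a + i * arc m d + s := by
    rw [← hfine, ← hcoarse, Nat.div_div_eq_div_mul, ← Nat.mul_div_mul_right _ n hK]
    congr 1
    ring
  have ha := Nat.div_add_mod (arc (m * K) a) K
  have hd := Nat.div_add_mod (arc (m * K) d) K
  rw [arc_mul_div hK] at ha hd
  have hlo := Nat.mul_div_le (arc (m * K) a + i * arc (m * K) d + e) K
  have hhi := Nat.lt_mul_div_succ (arc (m * K) a + i * arc (m * K) d + e) hK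
  rw [hdiv, ← ha, ← hd] at hlo hhi
  constructor <;> nlinarith

/-- The weighted sum over all carry patterns whose quotient by `(m * K) ^ 2` bounds the asymptotic
density of monochromatic progressions in the blow-ups of `f`. Patterns stop at step `k - 1`, where
the last of the `k` terms is reached. -/
def monoCellCount (f : ℕ → Fin 2) (m K k : ℕ) : ℕ :=
  ∑ t ∈ (range (k - 1)).powerset, #(monoPairs f m k (shift t)) * #(shiftCells K k (shift t))

theorem monoAPCount_blowUp_le (hf : f.Periodic m) (hm : 0 < m) {K : ℕ} (hK : 0 < K) (k : ℕ) :
    monoAPCount n k (blowUp f m n) ≤ (n / (m * K) + 1) ^ 2 * monoCellCount f m K k := by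
  let mono : Finset (ZMod n × ZMod n) :=
    {p | ∀ i < k, blowUp f m n (p.1 + i • p.2) = blowUp f m n p.1}
  let cells : Finset ((ℕ × ℕ) × (ℕ × ℕ)) := (range (k - 1)).powerset.biUnion fun t =>
    monoPairs f m k (shift t) ×ˢ shiftCells K k (shift t)
  let cell (p : ZMod n × ZMod n) : (ℕ × ℕ) × (ℕ × ℕ) :=
    ((arc m p.1, arc m p.2), (arc (m * K) p.1 % K, arc (m * K) p.2 % K))
  have hmaps : ∀ p ∈ mono, cell p ∈ cells := fun p hp =>
    mem_biUnion.2 ⟨carries (m * p.1.val) (m * p.2.val) n (k - 1),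
      mem_powerset.2 (filter_subset _ _),
      mk_mem_product (arc_mem_monoPairs hm hf (mem_filter_univ p |>.1 hp))
        (arc_mod_mem_shiftCells hK k p.1 p.2)⟩
  have hfiber : ∀ q ∈ cells, #{p ∈ mono | cell p = q} ≤ (n / (m * K) + 1) ^ 2 := by
    rintro ⟨⟨A, D⟩, u, v⟩ -
    have hsub : {p ∈ mono | cell p = ((A, D), (u, v))} ⊆
        ({z | arc (m * K) z = K * A + u} : Finset (ZMod n)) ×ˢ
          ({z | arc (m * K) z = K * D + v} : Finset (ZMod n)) := by
      intro p hp
      simp only [cell, mem_filter, Prod.mk.injEq, mem_product, mem_univ, true_and] at hp ⊢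
      obtain ⟨-, ⟨rfl, rfl⟩, rfl, rfl⟩ := hp
      simp only [← arc_mul_div hK m, Nat.div_add_mod, and_self]
    refine (card_le_card hsub).trans ?_
    rw [card_product, sq]
    gcongr <;> exact card_arc_eq_le (Nat.mul_pos hm hK) _
  calc monoAPCount n k (blowUp f m n) = #mono := by
        rw [monoAPCount, ← Set.ncard_coe_finset, coe_filter_univ]
    _ ≤ (n / (m * K) + 1) ^ 2 * #cells := card_le_mul_card_image_of_maps_to hmaps _ hfiber
    _ ≤ (n / (m * K) + 1) ^ 2 * monoCellCount f m K k := by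
        gcongr
        exact card_biUnion_le.trans_eq (sum_congr rfl fun t _ => card_product _ _)

end BlowUp

theorem eventually_monoAPCount_blowUp_le {f : ℕ → Fin 2} {m K k : ℕ} (hf : f.Periodic m)
    (hm : 0 < m) (hK : 0 < K) {C : ℝ} (hC : (monoCellCount f m K k : ℝ) < C * (m * K) ^ 2) :
    ∀ᶠ n : ℕ in atTop, (monoAPCount n k (blowUp f m n) : ℝ) ≤ C * n ^ 2 := by
  have : (0 : ℝ) < m * K := by positivity
  have hlim : Tendsto (fun n : ℕ => (1 + m * K / n : ℝ) ^ 2 * monoCellCount f m K k) atTop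
      (𝓝 (monoCellCount f m K k : ℝ)) := by
    simpa using (((tendsto_const_div_atTop_nhds_zero_nat (m * K : ℝ)).const_add 1).pow 2).mul_const
      (monoCellCount f m K k : ℝ)
  filter_upwards [hlim.eventually_lt_const hC, eventually_gt_atTop 0] with n hn hn₀
  have : NeZero n := ⟨hn₀.ne'⟩
  have hdiv : ((n / (m * K) : ℕ) : ℝ) ≤ n / (m * K) := by exact_mod_cast Nat.cast_div_le
  calc (monoAPCount n k (blowUp f m n) : ℝ)
      ≤ ((n / (m * K) : ℕ) + 1) ^ 2 * monoCellCount f m K k := by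
        exact_mod_cast monoAPCount_blowUp_le hf hm hK k
    _ ≤ (n / (m * K) + 1) ^ 2 * monoCellCount f m K k := by gcongr
    _ = (1 + m * K / n : ℝ) ^ 2 * monoCellCount f m K k * (n / (m * K)) ^ 2 := by
        field_simp
    _ ≤ C * (m * K) ^ 2 * (n / (m * K)) ^ 2 := by gcongr
    _ = C * n ^ 2 := by field_simp

/-- The colouring with period `44` whose value is `1` when the conditions that `i` is a square
modulo `11` and that `i % 4 < 2` are equivalent. By Euler's criterion the non-squares
are the `i` with `i ^ 5 ≡ -1` modulo `11`; this form is quick to evaluate in the kernel. -/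
def residueColor (i : ℕ) : Fin 2 := if i ^ 5 % 11 = 10 ↔ i % 4 < 2 then 0 else 1

theorem residueColor_periodic : residueColor.Periodic 44 := by
  intro i
  have h4 : (i + 44) % 4 = i % 4 := by omega
  have h11 : (i + 44) ^ 5 % 11 = i ^ 5 % 11 := Nat.ModEq.pow 5 (by simp only [Nat.ModEq]; omega)
  rw [residueColor, h4, h11, residueColor]

set_option maxRecDepth 10000 in
theorem monoCellCount_residueColor : monoCellCount residueColor 44 120 5 = 1539844 := by
  simp only [monoCellCount, card_shiftCells]
  decide +kernel

end ArcColoring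

theorem m5_upper_bound_even_general :
    ∃ N : ℕ, ∀ n : ℕ, N ≤ n →
      ∃ c : ZMod n → Fin 2, (monoAPCount n 5 c : ℝ) ≤ 3647 / 65712 * (n : ℝ) ^ 2 := by
  have hdensity : (ArcColoring.monoCellCount ArcColoring.residueColor 44 120 5 : ℝ) <
      3647 / 65712 * ((44 : ℕ) * (120 : ℕ)) ^ 2 := by
    rw [ArcColoring.monoCellCount_residueColor]
    norm_num
  obtain ⟨N, hN⟩ := eventually_atTop.1 <| ArcColoring.eventually_monoAPCount_blowUp_le
    ArcColoring.residueColor_periodic (by norm_num) (by norm_num) hdensity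
  exact ⟨N, fun n hn => ⟨_, hN n hn⟩⟩

theorem m5_upper_bound_even :
    ∀ ε : ℝ, 0 < ε → ∃ N : ℕ, ∀ n : ℕ, N ≤ n → Even n →
      ∃ c : ZMod n → Fin 2, (monoAPCount n 5 c : ℝ) ≤ (3647 / 65712 + ε) * (n : ℝ) ^ 2 := by
  refine fun ε hε => m5_upper_bound_even_general.imp fun N hN n hn _ => ?_
  exact (hN n hn).imp fun c hc => hc.trans (by gcongr; linarith)
end

section
/- For every ε > 0 there exists N such that for every integer n ≥ N the following holds: there exists a 2-coloring c of [n] such that the number of monochromatic increasing 4-APs in [n] under c is at most (1/72 + ε)·n², and there exists a 2-coloring c' of [n] such that the number of monochromatic increasing 5-APs in [n] under c' is at most (1/304 + ε)·n². (In the paper's notation, c_4 ≤ 1/72 and c_5 ≤ 1/304.) -/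
/-- Number of monochromatic increasing `k`-APs in `[n] = {1,…,n}` under the
2-coloring `c`: pairs `(a,d)` of integers with `d ≥ 1`, `1 ≤ a`,
`a+(k-1)d ≤ n`, and `c a = c (a+d) = ⋯ = c (a+(k-1)d)`. -/
noncomputable def incMonoAPCount (n k : ℕ) (c : ℤ → Fin 2) : ℕ :=
  Set.ncard {p : ℤ × ℤ | 1 ≤ p.2 ∧ 1 ≤ p.1 ∧ p.1 + ((k : ℤ) - 1) * p.2 ≤ n ∧
    ∀ i < k, c (p.1 + (i : ℤ) * p.2) = c p.1}

/-!
Color the nonzero residues modulo `m` so that no `(k + 1)`-AP modulo `m` with nonzero difference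
is monochromatic off zero, and color an integer according to the residue left after all factors
`m` are removed. A monochromatic `(k + 1)`-AP `(a, d)` of `[n]` then has `m ∣ d`. Either `m ∤ a`,
which leaves about `(1 - 1 / m) * n ^ 2 / (2 * k * m)` pairs, or `m ∣ a` and dividing by `m` gives a
monochromatic AP of `[n / m]`. Summing the geometric series gives the density
`1 / (2 * k * (m + 1))`. Quadratic residues provide such colorings for `k + 1 = 4`, `m = 11` and for
`k + 1 = 5`, `m = 37`, where the densities are `1 / 72` and `1 / 304`.
-/

open Finset

section PairCount

lemma card_filter_not_dvd_Icc_le {m : ℕ} (hm : 0 < m) (n : ℕ) :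
    (#{a ∈ Icc 1 n | ¬ m ∣ a} : ℝ) ≤ (1 - 1 / m) * n + 1 := by
  have hmultiples : #{a ∈ Icc 1 n | m ∣ a} = n / m := Nat.Ioc_filter_dvd_card_eq_div n m
  have hsplit : n / m + #{a ∈ Icc 1 n | ¬ m ∣ a} = n := by
    rw [← hmultiples, card_filter_add_card_filter_not, Nat.card_Icc, Nat.add_sub_cancel]
  have hsplit' : ((n / m : ℕ) : ℝ) + #{a ∈ Icc 1 n | ¬ m ∣ a} = n := by exact_mod_cast hsplit
  have hfloor : (n : ℝ) / m < (n / m : ℕ) + 1 := by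
    rw [div_lt_iff₀ (by positivity)]
    exact_mod_cast Nat.lt_mul_of_div_lt (Nat.lt_succ_self _) hm
  linear_combination hsplit' + hfloor

lemma sum_Icc_sub_mul_le {y : ℝ} (hy : 0 < y) (x : ℝ) (N : ℕ) :
    ∑ e ∈ Icc 1 N, (x - y * e) ≤ x ^ 2 / (2 * y) := by
  suffices h : 2 * y * ∑ e ∈ Icc 1 N, (x - y * e) ≤ x ^ 2 - (x - y * N) ^ 2 by
    rw [le_div_iff₀ (by positivity)]
    linarith [sq_nonneg (x - y * N)]
  induction N with
  | zero => simp
  | succ N ih =>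
    rw [sum_Icc_succ_top (by lia)]
    push_cast
    linear_combination ih + sq_nonneg y

/-- The pairs `⟨e, a⟩` of positive integers with `a + s * e ≤ n` and `m ∤ a`; for `s = k * m` these
encode the `(k + 1)`-APs in `[n]` with difference `m * e` and first term `a` not divisible by `m`.
The sigma type groups them by difference. -/
def notDvdPairs (m s n : ℕ) : Finset (Σ _ : ℕ, ℕ) :=
  (Icc 1 (n / s)).sigma fun e => {a ∈ Icc 1 (n - s * e) | ¬ m ∣ a}

lemma mem_notDvdPairs {m s n e a : ℕ} (hs : 0 < s) :
    ⟨e, a⟩ ∈ notDvdPairs m s n ↔ 1 ≤ e ∧ 1 ≤ a ∧ a + s * e ≤ n ∧ ¬ m ∣ a := by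
  simp only [notDvdPairs, mem_sigma, mem_filter, mem_Icc, Nat.le_div_iff_mul_le hs, mul_comm e s]
  lia

lemma card_notDvdPairs_le {m s : ℕ} (hm : 0 < m) (hs : 0 < s) (n : ℕ) :
    (#(notDvdPairs m s n) : ℝ) ≤ (1 - 1 / m) * (n ^ 2 / (2 * s)) + n / s := by
  have hfactor : 0 ≤ 1 - 1 / (m : ℝ) :=
    sub_nonneg.2 (div_le_one_of_le₀ (by exact_mod_cast hm) (by positivity))
  calc (#(notDvdPairs m s n) : ℝ)
      = ∑ e ∈ Icc 1 (n / s), (#{a ∈ Icc 1 (n - s * e) | ¬ m ∣ a} : ℝ) := by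
        rw [notDvdPairs, card_sigma, Nat.cast_sum]
    _ ≤ ∑ e ∈ Icc 1 (n / s), ((1 - 1 / m) * ((n : ℝ) - s * e) + 1) := by
        refine sum_le_sum fun e he => (card_filter_not_dvd_Icc_le hm _).trans_eq ?_
        have hle : s * e ≤ n := (Nat.mul_le_mul_left s (mem_Icc.1 he).2).trans (Nat.mul_div_le n s)
        rw [Nat.cast_sub hle, Nat.cast_mul]
    _ = (1 - 1 / m) * ∑ e ∈ Icc 1 (n / s), ((n : ℝ) - s * e) + (n / s : ℕ) := by
        rw [sum_add_distrib, ← mul_sum, sum_const, Nat.card_Icc, nsmul_one, Nat.add_sub_cancel]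
    _ ≤ (1 - 1 / m) * (n ^ 2 / (2 * s)) + n / s := by
        gcongr
        · exact sum_Icc_sub_mul_le (by positivity) _ _
        · exact Nat.cast_div_le

end PairCount

section IncMonoAPs

variable {α : Type*} {c : ℤ → α} {k m n : ℕ}

/-- The set of monochromatic increasing `k`-APs `(a, d)` in `[n]`, the set counted by
`incMonoAPCount`, for an arbitrary type of colors. -/
def incMonoAPs (n k : ℕ) (c : ℤ → α) : Set (ℤ × ℤ) :=
  {p : ℤ × ℤ | 1 ≤ p.2 ∧ 1 ≤ p.1 ∧ p.1 + ((k : ℤ) - 1) * p.2 ≤ n ∧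
    ∀ i < k, c (p.1 + (i : ℤ) * p.2) = c p.1}

lemma mk_mem_incMonoAPs_succ {a d : ℤ} :
    (a, d) ∈ incMonoAPs n (k + 1) c ↔
      1 ≤ d ∧ 1 ≤ a ∧ a + k * d ≤ n ∧ ∀ i < k + 1, c (a + (i : ℤ) * d) = c a := by
  simp [incMonoAPs]

lemma incMonoAPs_succ_subset (hk : 0 < k) :
    incMonoAPs n (k + 1) c ⊆ Set.Icc (1 : ℤ) n ×ˢ Set.Icc (1 : ℤ) n := by
  rintro ⟨a, d⟩ h
  obtain ⟨hd, ha, hn, -⟩ := mk_mem_incMonoAPs_succ.1 h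
  have hdk : d ≤ k * d := le_mul_of_one_le_left (by lia) (by exact_mod_cast hk)
  exact ⟨⟨ha, by lia⟩, ⟨hd, by lia⟩⟩

lemma finite_incMonoAPs_succ (hk : 0 < k) : (incMonoAPs n (k + 1) c).Finite :=
  ((Set.finite_Icc _ _).prod (Set.finite_Icc _ _)).subset (incMonoAPs_succ_subset hk)

lemma mk_mem_incMonoAPs_div (hm : 0 < m) (hmul : ∀ x, c (m * x) = c x) {a d : ℤ}
    (h : (m * a, m * d) ∈ incMonoAPs n (k + 1) c) : (a, d) ∈ incMonoAPs (n / m) (k + 1) c := by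
  obtain ⟨hd, ha, hn, hc⟩ := mk_mem_incMonoAPs_succ.1 h
  have hm' : (0 : ℤ) < m := by exact_mod_cast hm
  refine mk_mem_incMonoAPs_succ.2
    ⟨pos_of_mul_pos_right hd hm'.le, pos_of_mul_pos_right ha hm'.le, ?_, fun i hi => ?_⟩
  · rw [Int.natCast_div, Int.le_ediv_iff_mul_le hm']
    linarith
  · rw [← hmul, ← hmul a, ← hc i hi]
    congr 1
    ring

lemma incMonoAPs_subset_union (hm : 0 < m) (hk : 0 < k) (hmul : ∀ x, c (m * x) = c x)
    (hdvd : ∀ p ∈ incMonoAPs n (k + 1) c, (m : ℤ) ∣ p.2) :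
    incMonoAPs n (k + 1) c ⊆
      (fun x : Σ _ : ℕ, ℕ => ((x.2 : ℤ), (m : ℤ) * x.1)) '' notDvdPairs m (k * m) n ∪
      (fun p : ℤ × ℤ => (m * p.1, m * p.2)) '' incMonoAPs (n / m) (k + 1) c := by
  rintro ⟨a, d⟩ h
  obtain ⟨e, rfl : d = m * e⟩ := hdvd _ h
  by_cases hma : (m : ℤ) ∣ a
  · obtain ⟨b, rfl⟩ := hma
    exact Or.inr ⟨(b, e), mk_mem_incMonoAPs_div hm hmul h, rfl⟩
  · obtain ⟨hd, ha, hn, -⟩ := mk_mem_incMonoAPs_succ.1 h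
    have he : 1 ≤ e := pos_of_mul_pos_right hd (Int.natCast_nonneg m)
    lift a to ℕ using by lia
    lift e to ℕ using by lia
    refine Or.inl ⟨⟨e, a⟩, (mem_notDvdPairs (by positivity)).2 ?_, rfl⟩
    norm_cast at ha he hn hma
    exact ⟨he, ha, by rwa [mul_assoc], hma⟩

lemma ncard_incMonoAPs_le_add (hm : 0 < m) (hk : 0 < k) (hmul : ∀ x, c (m * x) = c x)
    (hdvd : ∀ p ∈ incMonoAPs n (k + 1) c, (m : ℤ) ∣ p.2) :
    (incMonoAPs n (k + 1) c).ncard ≤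
      #(notDvdPairs m (k * m) n) + (incMonoAPs (n / m) (k + 1) c).ncard := by
  have hfin : (incMonoAPs (n / m) (k + 1) c).Finite := finite_incMonoAPs_succ hk
  calc (incMonoAPs n (k + 1) c).ncard
      ≤ _ := Set.ncard_le_ncard (incMonoAPs_subset_union hm hk hmul hdvd)
        (((finite_toSet _).image _).union (hfin.image _))
    _ ≤ _ := Set.ncard_union_le _ _
    _ ≤ _ := Nat.add_le_add
        ((Set.ncard_image_le (finite_toSet _)).trans_eq (Set.ncard_coe_finset _))
        (Set.ncard_image_le hfin)

theorem ncard_incMonoAPs_le (hm : 2 ≤ m) (hk : 0 < k) (hmul : ∀ x, c (m * x) = c x)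
    (hdvd : ∀ n, ∀ p ∈ incMonoAPs n (k + 1) c, (m : ℤ) ∣ p.2) (n : ℕ) :
    ((incMonoAPs n (k + 1) c).ncard : ℝ) ≤ n ^ 2 / (2 * k * (m + 1)) + n := by
  induction n using Nat.strong_induction_on with
  | _ n ih =>
  rcases Nat.eq_zero_or_pos n with rfl | hn
  · have hempty : incMonoAPs 0 (k + 1) c = ∅ := by
      simpa using incMonoAPs_succ_subset (c := c) (n := 0) hk
    simp [hempty]
  have hm2 : (2 : ℝ) ≤ m := by exact_mod_cast hm
  have hk1 : (1 : ℝ) ≤ k := by exact_mod_cast hk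
  have hlinear : (n : ℝ) / (k * m) + n / m ≤ n := by
    have : (n : ℝ) / m ≤ n / 2 := by gcongr
    have : (n : ℝ) / (k * m) ≤ n / (1 * 2) := by gcongr
    linarith
  calc ((incMonoAPs n (k + 1) c).ncard : ℝ)
      ≤ #(notDvdPairs m (k * m) n) + (incMonoAPs (n / m) (k + 1) c).ncard := by
        exact_mod_cast ncard_incMonoAPs_le_add (by lia) hk hmul (hdvd n)
    _ ≤ ((1 - 1 / m) * (n ^ 2 / (2 * (k * m : ℕ))) + n / (k * m : ℕ)) +
          ((n / m : ℕ) ^ 2 / (2 * k * (m + 1)) + (n / m : ℕ)) :=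
        add_le_add (card_notDvdPairs_le (by lia) (by positivity) n)
          (ih _ (Nat.div_lt_self hn hm))
    _ ≤ ((1 - 1 / m) * (n ^ 2 / (2 * (k * m))) + n / (k * m)) +
          ((n / m) ^ 2 / (2 * k * (m + 1)) + n / m) := by
        push_cast
        gcongr <;> exact Nat.cast_div_le
    _ = n ^ 2 / (2 * k * (m + 1)) + (n / (k * m) + n / m) := by
        field_simp
        ring
    _ ≤ n ^ 2 / (2 * k * (m + 1)) + n := by gcongr

end IncMonoAPs

section Unroll

variable {α : Type*} {k m : ℕ}

/-- Every `k`-AP with nonzero difference has two nonzero terms which `f` colors differently. Zero is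
disregarded because `unroll` does not use the color of zero on nonzero integers. -/
def SplitsAPs {R : Type*} [Ring R] (k : ℕ) (f : R → α) : Prop :=
  ∀ a d : R, d ≠ 0 → ∃ i < k, ∃ j < k,
    a + i * d ≠ 0 ∧ a + j * d ≠ 0 ∧ f (a + i * d) ≠ f (a + j * d)

/-- The coloring of the integers which gives `x` the color of the residue modulo `m` of the
`m`-free part of `x`. Negative integers are treated as zero: only positive ones matter here. -/
def unroll (f : ZMod m → α) (x : ℤ) : α :=
  f (x.toNat.divMaxPow m)

lemma unroll_mul (hm : m ≠ 0) (f : ZMod m → α) (x : ℤ) : unroll f (m * x) = unroll f x := by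
  have htoNat : (m * x).toNat = m * x.toNat := by
    rcases le_total 0 x with hx | hx
    · rw [Int.toNat_mul (by positivity) hx, Int.toNat_natCast]
    · rw [Int.toNat_of_nonpos hx, Int.toNat_of_nonpos (by nlinarith), mul_zero]
  rw [unroll, unroll, htoNat, Nat.divMaxPow_base_mul hm]

lemma unroll_of_intCast_ne_zero (f : ZMod m → α) {x : ℤ} (hx : 0 ≤ x) (hxm : (x : ZMod m) ≠ 0) :
    unroll f x = f x := by
  lift x to ℕ using hx
  have hdvd : ¬ m ∣ x := by simpa [ZMod.natCast_eq_zero_iff] using hxm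
  simp [unroll, Nat.divMaxPow, Nat.maxPowDvdDiv_of_not_dvd hdvd]

lemma dvd_of_mem_incMonoAPs_unroll {f : ZMod m → α} (hf : SplitsAPs k f) (n : ℕ) :
    ∀ p ∈ incMonoAPs n k (unroll f), (m : ℤ) ∣ p.2 := by
  rintro ⟨a, d⟩ ⟨hd, ha, -, hc⟩
  by_contra hmd
  obtain ⟨i, hi, j, hj, hi0, hj0, hij⟩ :=
    hf a d (by rwa [Ne, ZMod.intCast_zmod_eq_zero_iff_dvd])
  have hunroll (l : ℕ) (hl : (a + l * d : ZMod m) ≠ 0) :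
      unroll f (a + l * d) = f (a + l * d) := by
    rw [unroll_of_intCast_ne_zero f (by positivity) (by exact_mod_cast hl)]
    push_cast
    rfl
  apply hij
  rw [← hunroll i hi0, ← hunroll j hj0]
  exact (hc i hi).trans (hc j hj).symm

theorem incMonoAPCount_unroll_le (hm : 2 ≤ m) (hk : 0 < k) {f : ZMod m → Fin 2}
    (hf : SplitsAPs (k + 1) f) (n : ℕ) :
    (incMonoAPCount n (k + 1) (unroll f) : ℝ) ≤ n ^ 2 / (2 * k * (m + 1)) + n :=
  ncard_incMonoAPs_le hm hk (unroll_mul (by lia) f) (dvd_of_mem_incMonoAPs_unroll hf) n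

end Unroll

section QuadraticResidues

/-- The 2-coloring of a finite field whose color classes are the nonzero squares and the rest. -/
def residueColoring (F : Type*) [Field F] [Fintype F] [DecidableEq F] (x : F) : Fin 2 :=
  if quadraticChar F x = 1 then 1 else 0

lemma splitsAPs_residueColoring {F : Type*} [Field F] [Fintype F] [DecidableEq F] {k : ℕ}
    (h : ∀ b : F, ∃ i < k, ∃ j < k,
      quadraticChar F (b + (i : ℕ)) = 1 ∧ quadraticChar F (b + (j : ℕ)) = -1) :
    SplitsAPs k (residueColoring F) := by
  intro a d hd
  obtain ⟨i, hi, j, hj, hχi, hχj⟩ := h (a / d)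
  have hscale (l : ℕ) :
      quadraticChar F (a + l * d) = quadraticChar F d * quadraticChar F (a / d + l) := by
    rw [← map_mul, mul_add, mul_div_cancel₀ a hd, mul_comm d]
  refine ⟨i, hi, j, hj, ?_⟩
  simp only [ne_eq, ← quadraticChar_eq_zero_iff (F := F), residueColoring, hscale, hχi, hχj]
  rcases quadraticChar_dichotomy hd with hχd | hχd <;> simp [hχd]

instance : Fact (Nat.Prime 11) := ⟨by norm_num⟩

instance : Fact (Nat.Prime 37) := ⟨by norm_num⟩

lemma splitsAPs_four_residueColoring_eleven : SplitsAPs 4 (residueColoring (ZMod 11)) :=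
  splitsAPs_residueColoring (by decide)

lemma splitsAPs_five_residueColoring_thirtySeven : SplitsAPs 5 (residueColoring (ZMod 37)) :=
  splitsAPs_residueColoring (by decide)

end QuadraticResidues

theorem c4_le_and_c5_le :
    ∀ ε : ℝ, 0 < ε → ∃ N : ℕ, ∀ n : ℕ, N ≤ n →
      (∃ c : ℤ → Fin 2, (incMonoAPCount n 4 c : ℝ) ≤ (1 / 72 + ε) * (n : ℝ) ^ 2) ∧
      (∃ c' : ℤ → Fin 2, (incMonoAPCount n 5 c' : ℝ) ≤ (1 / 304 + ε) * (n : ℝ) ^ 2) := by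
  intro ε hε
  obtain ⟨N, hN⟩ := exists_nat_ge (1 / ε)
  refine ⟨N, fun n hn => ?_⟩
  have hlinear : (n : ℝ) ≤ ε * n ^ 2 := by
    have hεn : 1 ≤ n * ε := (div_le_iff₀ hε).1 (hN.trans (by exact_mod_cast hn))
    linear_combination (n : ℝ) * hεn
  have h4 := incMonoAPCount_unroll_le (by norm_num) (by norm_num)
    splitsAPs_four_residueColoring_eleven n
  have h5 := incMonoAPCount_unroll_le (by norm_num) (by norm_num)
    splitsAPs_five_residueColoring_thirtySeven n
  norm_num at h4 h5
  exact ⟨⟨_, h4.trans (by linarith)⟩, ⟨_, h5.trans (by linarith)⟩⟩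
end
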